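/- arXiv:math/0212003 — 5 statements merged into one kernel-verified Lean document; each statement's English description precedes it below -/
import Mathlib

section
/- Let L act on the finite group G by automorphisms, let g ∈ G, and consider the set X = {(d,e,f) ∈ G×G×G : def = g}. Consider two equivalence relations on X: in the first, (d,e,f) ~ (d',e',f') iff they lie in the same orbit under the actions of L_g on the pair (de,f) together with, for each f, the action of L_{gf^{-1}} = L_{de} on the pair (d,e); in the second, under the actions of L_g on the pair (d,ef) together with, for each d, the action of L_{d^{-1}g} = L_{ef} on the pair (e,f). Then the bijection X → X given by (d,e,f) ↦ (gfg^{-1}, d, e) carries equivalence classes of the first relation bijectively onto equivalence classes of the second; consequently a set of representatives for the first set of orbits yields, via this map, a set of representatives for the second. -/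
section

variable (L G : Type) [Group L] [Group G] [MulDistribMulAction L G]

/-- The first relation on triples `(d,e,f)` with `def = g`: it is generated by the action
of `L_g` on the pairs `(de, f)` (the diagonal action on triples) together with, for each
`f`, the action of the stabilizer `L_{gf⁻¹} = L_{de}` on the pairs `(d,e)`.  The orbit
equivalence relation is `Relation.EqvGen` of this relation. -/
def tripleRelFirst (g : G) (p q : G × G × G) : Prop :=
  (∃ x : L, x • g = g ∧ q = (x • p.1, x • p.2.1, x • p.2.2)) ∨
  (∃ y : L, y • (p.1 * p.2.1) = p.1 * p.2.1 ∧ q = (y • p.1, y • p.2.1, p.2.2))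

/-- The second relation on triples `(d,e,f)` with `def = g`: it is generated by the action
of `L_g` on the pairs `(d, ef)` (the diagonal action on triples) together with, for each
`d`, the action of the stabilizer `L_{d⁻¹g} = L_{ef}` on the pairs `(e,f)`. -/
def tripleRelSecond (g : G) (p q : G × G × G) : Prop :=
  (∃ x : L, x • g = g ∧ q = (x • p.1, x • p.2.1, x • p.2.2)) ∨
  (∃ y : L, y • (p.2.1 * p.2.2) = p.2.1 * p.2.2 ∧ q = (p.1, y • p.2.1, y • p.2.2))

end

theorem tripleRel_fwd (L G : Type) [Group L] [Group G] [MulDistribMulAction L G] (g : G)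
    (p q : G × G × G) (h : tripleRelFirst L G g p q) :
    tripleRelSecond L G g (g * p.2.2 * g⁻¹, p.1, p.2.1) (g * q.2.2 * g⁻¹, q.1, q.2.1) := by
  rcases h with ⟨x, hx, rfl⟩ | ⟨y, hy, rfl⟩
  · exact Or.inl ⟨x, hx, by simp [smul_mul', smul_inv', hx]⟩
  · exact Or.inr ⟨y, hy, rfl⟩

theorem tripleRel_bwd (L G : Type) [Group L] [Group G] [MulDistribMulAction L G] (g : G)
    (p q : G × G × G) (h : tripleRelSecond L G g p q) :
    tripleRelFirst L G g (p.2.1, p.2.2, g⁻¹ * p.1 * g) (q.2.1, q.2.2, g⁻¹ * q.1 * g) := by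
  rcases h with ⟨x, hx, rfl⟩ | ⟨y, hy, rfl⟩
  · exact Or.inl ⟨x, hx, by simp [smul_mul', smul_inv', hx]⟩
  · exact Or.inr ⟨y, hy, rfl⟩

theorem eqvGen_lift_aux {A B : Type} {r : A → A → Prop} {s : B → B → Prop} (f : A → B)
    (h : ∀ a b, r a b → s (f a) (f b)) {a b : A} (hab : Relation.EqvGen r a b) :
    Relation.EqvGen s (f a) (f b) := by
  induction hab with
  | rel x y hxy => exact .rel _ _ (h _ _ hxy)
  | refl x => exact .refl _
  | symm x y _ ih => exact .symm _ _ ih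
  | trans x y z _ _ ih1 ih2 => exact .trans _ _ _ ih1 ih2

/-- The set `X = {(d,e,f) ∈ G×G×G : def = g}` carries two orbit equivalence relations,
and the bijection `(d,e,f) ↦ (gfg⁻¹, d, e)` of `X` carries the equivalence classes of the
first relation bijectively onto those of the second; consequently a set of representatives
for the first relation yields, via this map, a set of representatives for the second. -/
theorem triple_orbit_correspondence
    (L G : Type) [Group L] [Group G] [MulDistribMulAction L G] (g : G) :
    let X : Set (G × G × G) := {p | p.1 * p.2.1 * p.2.2 = g}
    let φ : G × G × G → G × G × G := fun p => (g * p.2.2 * g⁻¹, p.1, p.2.1)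
    -- `φ` maps `X` bijectively onto itself
    Set.BijOn φ X X ∧
    -- `φ` carries the first equivalence relation to the second
    (∀ p ∈ X, ∀ q ∈ X,
      Relation.EqvGen (tripleRelFirst L G g) p q ↔
        Relation.EqvGen (tripleRelSecond L G g) (φ p) (φ q)) ∧
    -- hence a set of representatives for the first relation is carried by `φ` to a set of
    -- representatives for the second relation
    (∀ T : Set (G × G × G), T ⊆ X →
      (∀ p ∈ X, ∃! q, q ∈ T ∧ Relation.EqvGen (tripleRelFirst L G g) p q) →
      (φ '' T ⊆ X ∧
        ∀ p ∈ X, ∃! q, q ∈ φ '' T ∧ Relation.EqvGen (tripleRelSecond L G g) p q)) := by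
  intro X φ
  have hbij : Set.BijOn φ X X := by
    refine ⟨?_, ?_, ?_⟩
    · rintro ⟨d, e, f⟩ h
      simp only [X, φ, Set.mem_setOf_eq] at h ⊢
      subst h
      group
    · rintro ⟨d, e, f⟩ _ ⟨d', e', f'⟩ _ h
      simp only [φ, Prod.mk.injEq, mul_left_inj, mul_right_inj] at h
      obtain ⟨h1, h2, h3⟩ := h
      simp [h1, h2, h3]
    · rintro ⟨d, e, f⟩ h
      refine ⟨(e, f, g⁻¹ * d * g), ?_, ?_⟩
      · simp only [X, Set.mem_setOf_eq] at h ⊢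
        subst h
        group
      · simp only [φ, Prod.mk.injEq, and_true]
        group
  have hrel : ∀ p q, Relation.EqvGen (tripleRelFirst L G g) p q ↔
      Relation.EqvGen (tripleRelSecond L G g) (φ p) (φ q) := by
    intro p q
    constructor
    · exact eqvGen_lift_aux φ (tripleRel_fwd L G g)
    · intro h
      have h2 := eqvGen_lift_aux (fun p : G × G × G => (p.2.1, p.2.2, g⁻¹ * p.1 * g))
        (tripleRel_bwd L G g) h
      simpa [φ, mul_assoc] using h2
  refine ⟨hbij, fun p _ q _ => hrel p q, ?_⟩
  intro T hT hrep
  refine ⟨(Set.image_mono hT).trans hbij.mapsTo.image_subset, ?_⟩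
  intro p hp
  obtain ⟨p, hp', rfl⟩ := hbij.surjOn hp
  obtain ⟨q, ⟨hqT, hq⟩, huniq⟩ := hrep p hp'
  refine ⟨φ q, ⟨⟨q, hqT, rfl⟩, (hrel _ _).1 hq⟩, ?_⟩
  rintro _ ⟨⟨r, hr, rfl⟩, hpr⟩
  rw [huniq r ⟨hr, (hrel _ _).2 hpr⟩]
end

section
/- Let R = S#_σG be a crossed product over a field k, g ∈ G with centralizer C(g), and let C denote the conjugacy class of g. Then the Δ-module R_C := ⊕_{h∈C} S·h̄ is isomorphic both to the induced module Δ ⊗_{Δ(C(g))} S·ḡ and to the coinduced module Hom_{Δ(C(g))}(Δ, S·ḡ) (where Δ acts on the latter by ((r_0⊗r_1)·f)(s_0⊗s_1) = f(s_0 r_0 ⊗ r_1 s_1)); an explicit Δ-module isomorphism R_C → Hom_{Δ(C(g))}(Δ, S·ḡ) is given by h̄ r ḡ (h̄)^{-1} ↦ (((h̄)^{-1} ⊗ h̄) ↦ r·ḡ), where h ranges over a set of coset representatives for C(g) in G. -/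
open scoped TensorProduct DirectSum

set_option synthInstance.maxHeartbeats 1000000
set_option maxHeartbeats 4000000

/-- A crossed product `R = S #_σ G` of a `k`-algebra `S` by a finite group `G` acting by
automorphisms, with respect to a normalized two-cocycle `σ` with values in the units of
the center of `S`:  `R` contains `S` as a subalgebra via `emb`, contains invertible
elements `ḡ = u g` for `g ∈ G` with `ḡ s ḡ⁻¹ = ᵍs`, `ḡ h̄ = σ(g,h) (gh)‾`, and
`R = ⊕_{g ∈ G} S·ḡ` as a `k`-module. -/
structure CrossedProduct (k : Type) [Field k] (S : Type) [Ring S] [Algebra k S]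
    (G : Type) [Group G] [Fintype G]
    (act : G →* (S ≃ₐ[k] S)) (σ : G → G → S)
    (R : Type) [Ring R] [Algebra k R] where
  emb : S →ₐ[k] R
  u : G → Rˣ
  sigma_central : ∀ (g h : G) (s : S), σ g h * s = s * σ g h
  sigma_isUnit : ∀ g h, IsUnit (σ g h)
  cocycle : ∀ g h l, act g (σ h l) * σ g (h * l) = σ g h * σ (g * h) l
  sigma_normal₁ : ∀ g, σ g 1 = 1
  sigma_normal₂ : ∀ g, σ 1 g = 1
  u_conj : ∀ (g : G) (s : S), (u g : R) * emb s = emb (act g s) * (u g : R)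
  u_mul : ∀ g h : G, (u g : R) * (u h : R) = emb (σ g h) * (u (g * h) : R)
  u_one : u 1 = 1
  basis : Function.Bijective fun f : G → S => ∑ g, emb (f g) * ((u g : R))

section

variable (k : Type) [Field k] (S : Type) [Ring S] [Algebra k S]
  (G : Type) [Group G] [Fintype G]
  (act : G →* (S ≃ₐ[k] S)) (σ : G → G → S)
  (R : Type) [Ring R] [Algebra k R]

/-- `R` is a module over its enveloping algebra `R^e = R ⊗ R^{op}`, by left and right
multiplication. -/
noncomputable instance : Module (R ⊗[k] Rᵐᵒᵖ) R := TensorProduct.Algebra.module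

/-- The subalgebra `Δ(H) = ⊕_{h ∈ H} S·h̄ ⊗ S·(h̄)⁻¹` of `R^e = R ⊗ R^{op}`, for a
subgroup `H ≤ G`. -/
noncomputable def Delta (cp : CrossedProduct k S G act σ R) (H : Subgroup G) :
    Subalgebra k (R ⊗[k] Rᵐᵒᵖ) :=
  Algebra.adjoin k {z | ∃ (h : H) (s s' : S),
    z = (cp.emb s * (cp.u h : R)) ⊗ₜ[k] (MulOpposite.op (cp.emb s' * ((cp.u h)⁻¹ : Rˣ)))}

end

/-- A copy of `S`, recording the `k`-submodule `S·ḡ ⊆ R` (for `g ∈ G`): the map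
`s ↦ s·ḡ` identifies `STwist S g` with `S·ḡ`.  For `g` centralized by a subgroup `H`,
`S·ḡ` is a `Δ(H)`-submodule of `R`; the corresponding `Δ(H)`-module structures on
`STwist S g` are hypothesized below, pinned down by this identification. -/
@[ext] structure STwist (S : Type) {G : Type} (g : G) : Type where
  ofS ::
  toS : S

namespace STwist

variable {S G : Type} [Ring S] (g : G)

/-- `STwist S g ≃ S`. -/
def equiv : STwist S g ≃ S where
  toFun := toS
  invFun := ofS
  left_inv := fun _ => rfl
  right_inv := fun _ => rfl

instance : AddCommGroup (STwist S g) := (equiv g).addCommGroup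

@[simp] lemma toS_add (a b : STwist S g) : (a + b).toS = a.toS + b.toS := rfl

end STwist

section

variable (k : Type) [Field k] (S : Type) [Ring S] [Algebra k S]
  (G : Type) [Group G] [Fintype G]
  (act : G →* (S ≃ₐ[k] S)) (σ : G → G → S)
  (R : Type) [Ring R] [Algebra k R]

/-- The `k`-span `S·ḡ ⊆ R`. -/
noncomputable def SgSpan (cp : CrossedProduct k S G act σ R) (g : G) : Submodule k R :=
  Submodule.span k {z : R | ∃ s : S, z = cp.emb s * (cp.u g : R)}

/-- The `k`-span `R_C = ⊕_{h ∈ C} S·h̄ ⊆ R`, for `C` the conjugacy class of `g`. -/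
noncomputable def Rclass (cp : CrossedProduct k S G act σ R) (g : G) : Submodule k R :=
  Submodule.span k {z : R | ∃ (h : G) (s : S), IsConj g h ∧ z = cp.emb s * (cp.u h : R)}

/-- The coinduced module `Hom_{Δ(C(g))}(Δ, S·ḡ)`: additive, `k`-linear, `S·ḡ`-valued
functions on `Δ = Δ(G)` which are left `Δ(C(g))`-linear. -/
def CoInd (cp : CrossedProduct k S G act σ R) (g : G)
    (hle : Delta k S G act σ R cp (Subgroup.centralizer {g}) ≤ Delta k S G act σ R cp ⊤) :
    Type :=
  {f : ↥(Delta k S G act σ R cp ⊤) → R //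
    (∀ w w', f (w + w') = f w + f w') ∧
    (∀ (c : k) (w), f (c • w) = c • f w) ∧
    (∀ w, f w ∈ SgSpan k S G act σ R cp g) ∧
    (∀ (z : ↥(Delta k S G act σ R cp (Subgroup.centralizer {g}))) (w),
      f (Subalgebra.inclusion hle z * w) = ((z : R ⊗[k] Rᵐᵒᵖ)) • f w)}

end

section helpers

variable {k : Type} [Field k] {S : Type} [Ring S] [Algebra k S]
  {G : Type} [Group G] [Fintype G]
  {act : G →* (S ≃ₐ[k] S)} {σ : G → G → S}
  {R : Type} [Ring R] [Algebra k R]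

namespace CPaux

lemma smul_def (a b r : R) :
    ((a ⊗ₜ[k] MulOpposite.op b : R ⊗[k] Rᵐᵒᵖ)) • r = a * r * b := by
  rw [TensorProduct.Algebra.smul_def]
  simp [mul_assoc]

lemma zsmul0 (r : R) : (0 : R ⊗[k] Rᵐᵒᵖ) • r = 0 :=
  zero_smul (R ⊗[k] Rᵐᵒᵖ) r

variable (cp : CrossedProduct k S G act σ R)

lemma mem_Sg (g : G) (r : R) :
    r ∈ SgSpan k S G act σ R cp g ↔ ∃ s, r = cp.emb s * (cp.u g : R) := by
  constructor
  · intro h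
    induction h using Submodule.span_induction with
    | mem x hx => exact hx
    | zero => exact ⟨0, by simp⟩
    | add x y _ _ hx hy =>
      obtain ⟨s, rfl⟩ := hx
      obtain ⟨t, rfl⟩ := hy
      exact ⟨s + t, by rw [map_add, add_mul]⟩
    | smul c x _ hx =>
      obtain ⟨s, rfl⟩ := hx
      exact ⟨c • s, by rw [map_smul, smul_mul_assoc]⟩
  · intro h
    exact Submodule.subset_span h

lemma u_mem (g : G) : (cp.u g : R) ∈ SgSpan k S G act σ R cp g :=
  (mem_Sg cp g _).2 ⟨1, by simp⟩

lemma emb_mul_mem (s : S) {g : G} {r : R} (h : r ∈ SgSpan k S G act σ R cp g) :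
    cp.emb s * r ∈ SgSpan k S G act σ R cp g := by
  obtain ⟨t, rfl⟩ := (mem_Sg cp g _).1 h
  exact (mem_Sg cp g _).2 ⟨s * t, by rw [map_mul, mul_assoc]⟩

lemma mul_mem {y z : G} {a b : R} (ha : a ∈ SgSpan k S G act σ R cp y)
    (hb : b ∈ SgSpan k S G act σ R cp z) : a * b ∈ SgSpan k S G act σ R cp (y * z) := by
  obtain ⟨s, rfl⟩ := (mem_Sg cp _ _).1 ha
  obtain ⟨t, rfl⟩ := (mem_Sg cp _ _).1 hb
  refine (mem_Sg cp _ _).2 ⟨s * act y t * σ y z, ?_⟩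
  calc cp.emb s * (cp.u y : R) * (cp.emb t * (cp.u z : R))
      = cp.emb s * ((cp.u y : R) * cp.emb t) * (cp.u z : R) := by simp only [mul_assoc]
    _ = cp.emb s * cp.emb (act y t) * ((cp.u y : R) * (cp.u z : R)) := by
        rw [cp.u_conj]; simp only [mul_assoc]
    _ = _ := by rw [cp.u_mul]; simp only [mul_assoc, map_mul]

lemma inv_mem (y : G) : (((cp.u y)⁻¹ : Rˣ) : R) ∈ SgSpan k S G act σ R cp y⁻¹ := by
  obtain ⟨t, ht⟩ := cp.sigma_isUnit y⁻¹ y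
  refine (mem_Sg cp _ _).2 ⟨((t⁻¹ : Sˣ) : S), ?_⟩
  have h := cp.u_mul y⁻¹ y
  rw [inv_mul_cancel, cp.u_one, Units.val_one, mul_one, ← ht] at h
  refine Units.inv_eq_of_mul_eq_one_left ?_
  rw [mul_assoc, h, ← map_mul, Units.inv_mul, map_one]

/-- Homogeneous elements of degree `y` of the enveloping algebra's diagonal part. -/
def Hm (y : G) (z : R ⊗[k] Rᵐᵒᵖ) : Prop :=
  ∃ a ∈ SgSpan k S G act σ R cp y, ∃ b ∈ SgSpan k S G act σ R cp y⁻¹,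
    z = a ⊗ₜ[k] MulOpposite.op b

variable {cp}

lemma Hm.mul {y y' : G} {z z' : R ⊗[k] Rᵐᵒᵖ} (h : Hm cp y z) (h' : Hm cp y' z') :
    Hm cp (y * y') (z * z') := by
  obtain ⟨a, ha, b, hb, rfl⟩ := h
  obtain ⟨a', ha', b', hb', rfl⟩ := h'
  refine ⟨a * a', mul_mem cp ha ha', b' * b, ?_, ?_⟩
  · rw [mul_inv_rev]; exact mul_mem cp hb' hb
  · rw [Algebra.TensorProduct.tmul_mul_tmul, MulOpposite.op_mul]

lemma Hm.mem {H : Subgroup G} {y : G} (hy : y ∈ H) {z : R ⊗[k] Rᵐᵒᵖ} (h : Hm cp y z) :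
    z ∈ Delta k S G act σ R cp H := by
  obtain ⟨a, ha, b, hb, rfl⟩ := h
  obtain ⟨s, rfl⟩ := (mem_Sg cp _ _).1 ha
  have h1 : b * (cp.u y : R) ∈ SgSpan k S G act σ R cp 1 := by
    have := mul_mem cp hb (u_mem cp y)
    rwa [inv_mul_cancel] at this
  obtain ⟨t, ht⟩ := (mem_Sg cp _ _).1 h1
  rw [cp.u_one, Units.val_one, mul_one] at ht
  refine Algebra.subset_adjoin ⟨⟨y, hy⟩, s, t, ?_⟩
  rw [← ht, mul_assoc, Units.mul_inv, mul_one]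

lemma Hm.smulk {y : G} {z : R ⊗[k] Rᵐᵒᵖ} (c : k) (h : Hm cp y z) : Hm cp y (c • z) := by
  obtain ⟨a, ha, b, hb, rfl⟩ := h
  exact ⟨c • a, Submodule.smul_mem _ _ ha, b, hb, (TensorProduct.smul_tmul' c a _)⟩

lemma Hm.smul_mem {y h : G} {z : R ⊗[k] Rᵐᵒᵖ} (hz : Hm cp y z) {r : R}
    (hr : r ∈ SgSpan k S G act σ R cp h) :
    z • r ∈ SgSpan k S G act σ R cp (y * h * y⁻¹) := by
  obtain ⟨a, ha, b, hb, rfl⟩ := hz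
  rw [smul_def]
  exact mul_mem cp (mul_mem cp ha hr) hb

lemma Delta_induction {H : Subgroup G} {p : R ⊗[k] Rᵐᵒᵖ → Prop} (h0 : p 0)
    (hadd : ∀ a b, a ∈ Delta k S G act σ R cp H → b ∈ Delta k S G act σ R cp H →
      p a → p b → p (a + b))
    (hh : ∀ y ∈ H, ∀ z, Hm cp y z → p z) {z : R ⊗[k] Rᵐᵒᵖ}
    (hz : z ∈ Delta k S G act σ R cp H) : p z := by
  have key : ∀ w, w ∈ Delta k S G act σ R cp H →
      w ∈ Submodule.span k {z | ∃ y ∈ H, Hm cp y z} := by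
    intro w hw
    have hw' : w ∈ Subalgebra.toSubmodule (Delta k S G act σ R cp H) := hw
    rw [Delta, Algebra.adjoin_eq_span] at hw'
    refine Submodule.span_mono ?_ hw'
    intro v hv
    induction hv using Submonoid.closure_induction with
    | mem x hx =>
      obtain ⟨⟨y, hy⟩, s, t, rfl⟩ := hx
      exact ⟨y, hy, _, emb_mul_mem cp _ (u_mem cp y), _, emb_mul_mem cp _ (inv_mem cp y), rfl⟩
    | one =>
      refine ⟨1, H.one_mem, 1, ?_, 1, ?_, rfl⟩
      · simpa [cp.u_one] using u_mem cp 1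
      · simpa [cp.u_one] using u_mem cp 1
    | mul x y _ _ hx hy =>
      obtain ⟨a, ha, hx⟩ := hx
      obtain ⟨b, hb, hy⟩ := hy
      exact ⟨a * b, H.mul_mem ha hb, hx.mul hy⟩
  have key2 : ∀ w, w ∈ Submodule.span k {z | ∃ y ∈ H, Hm cp y z} →
      w ∈ Delta k S G act σ R cp H ∧ p w := by
    intro w hw
    induction hw using Submodule.closure_induction with
    | zero => exact ⟨zero_mem _, h0⟩
    | add x y _ _ hx hy => exact ⟨add_mem hx.1 hy.1, hadd _ _ hx.1 hy.1 hx.2 hy.2⟩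
    | smul_mem c x hx =>
      obtain ⟨y, hy, hx⟩ := hx
      exact ⟨(hx.smulk c).mem hy, hh y hy _ (hx.smulk c)⟩
  exact (key2 z (key z hz)).2

variable (cp)

/-- The decomposition as a linear equivalence. -/
noncomputable def eqv : (G → S) ≃ₗ[k] R :=
  LinearEquiv.ofBijective
    { toFun := fun f : G → S => ∑ g, cp.emb (f g) * ((cp.u g : R))
      map_add' := by intro f f'; simp [add_mul, Finset.sum_add_distrib]
      map_smul' := by intro c f; simp [Finset.smul_sum] } cp.basis

lemma eqv_apply (f : G → S) : eqv cp f = ∑ g, cp.emb (f g) * ((cp.u g : R)) := rfl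

/-- The projection on the component `S·ḡ`. -/
noncomputable def pr (g : G) : R →ₗ[k] R where
  toFun r := cp.emb ((eqv cp).symm r g) * (cp.u g : R)
  map_add' := by intro a b; simp [add_mul]
  map_smul' := by intro c a; simp

lemma pr_apply (g : G) (r : R) : pr cp g r = cp.emb ((eqv cp).symm r g) * (cp.u g : R) := rfl

lemma pr_mem (g : G) (r : R) : pr cp g r ∈ SgSpan k S G act σ R cp g :=
  (mem_Sg cp g _).2 ⟨_, rfl⟩

lemma sum_pr (r : R) : ∑ g, pr cp g r = r := by
  have := (eqv cp).apply_symm_apply r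
  rw [eqv_apply] at this
  exact this

lemma symm_apply [DecidableEq G] (g : G) (s : S) :
    (eqv cp).symm (cp.emb s * (cp.u g : R)) = Pi.single g s := by
  rw [LinearEquiv.symm_apply_eq, eqv_apply, Finset.sum_eq_single g]
  · simp
  · intro b _ hb; simp [hb]
  · simp

lemma pr_self {g : G} {r : R} (hr : r ∈ SgSpan k S G act σ R cp g) : pr cp g r = r := by
  classical
  obtain ⟨s, rfl⟩ := (mem_Sg cp _ _).1 hr
  rw [pr_apply, symm_apply]; simp

lemma pr_ne {g h : G} {r : R} (hr : r ∈ SgSpan k S G act σ R cp h) (hne : g ≠ h) :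
    pr cp g r = 0 := by
  classical
  obtain ⟨s, rfl⟩ := (mem_Sg cp _ _).1 hr
  rw [pr_apply, symm_apply]; simp [hne]

variable {cp}

lemma Hm.pr {y : G} {z : R ⊗[k] Rᵐᵒᵖ} (hz : Hm cp y z) (h : G) (r : R) :
    pr cp (y * h * y⁻¹) (z • r) = z • pr cp h r := by
  conv_lhs => rw [← sum_pr cp r, Finset.smul_sum, map_sum]
  rw [Finset.sum_eq_single h]
  · exact pr_self cp (hz.smul_mem (pr_mem cp h r))
  · intro l _ hl
    refine pr_ne cp (hz.smul_mem (pr_mem cp l r)) ?_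
    intro h'
    exact hl (by simpa using h'.symm)
  · simp

lemma pr_cent {g : G} {z : R ⊗[k] Rᵐᵒᵖ}
    (hz : z ∈ Delta k S G act σ R cp (Subgroup.centralizer {g})) (r : R) :
    CPaux.pr cp g (z • r) = z • CPaux.pr cp g r := by
  refine Delta_induction (cp := cp) (H := Subgroup.centralizer {g})
    (p := fun z => CPaux.pr cp g (z • r) = z • CPaux.pr cp g r) ?_ ?_ ?_ hz
  · simp only [zsmul0, map_zero, zero_mem]
  · intro a b _ _ ha hb
    rw [add_smul, map_add, ha, hb, add_smul]
  · intro y hy z hz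
    have h := hz.pr g r
    rw [Subgroup.mem_centralizer_singleton_iff] at hy
    rwa [hy, mul_inv_cancel_right] at h

lemma cent_smul_mem {g : G} {z : R ⊗[k] Rᵐᵒᵖ}
    (hz : z ∈ Delta k S G act σ R cp (Subgroup.centralizer {g})) {r : R}
    (hr : r ∈ SgSpan k S G act σ R cp g) : z • r ∈ SgSpan k S G act σ R cp g := by
  rw [← pr_self cp hr, ← pr_cent hz]
  exact pr_mem cp _ _

lemma Sg_le {g h : G} (hc : IsConj g h) :
    SgSpan k S G act σ R cp h ≤ Rclass k S G act σ R cp g := by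
  refine Submodule.span_mono ?_
  rintro _ ⟨s, rfl⟩
  exact ⟨h, s, hc, rfl⟩

/-- The conjugacy class as a finset. -/
noncomputable def Cl (g : G) : Finset G := (Set.toFinite {h | IsConj g h}).toFinset

lemma mem_Cl {g h : G} : h ∈ Cl g ↔ IsConj g h := by simp [Cl]

lemma pr_Rclass {g h : G} (hc : ¬ IsConj g h) {r : R} (hr : r ∈ Rclass k S G act σ R cp g) :
    CPaux.pr cp h r = 0 := by
  have : Rclass k S G act σ R cp g ≤ LinearMap.ker (CPaux.pr cp h) := by
    refine Submodule.span_le.2 ?_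
    rintro _ ⟨l, s, hl, rfl⟩
    refine pr_ne cp ((mem_Sg cp l _).2 ⟨s, rfl⟩) ?_
    rintro rfl
    exact hc hl
  exact this hr

lemma sum_pr_Cl {g : G} {r : R} (hr : r ∈ Rclass k S G act σ R cp g) :
    ∑ h ∈ Cl g, CPaux.pr cp h r = r := by
  conv_rhs => rw [← sum_pr cp r]
  refine Finset.sum_subset (Finset.subset_univ _) ?_
  intro h _ hh
  exact pr_Rclass (fun h' => hh (mem_Cl.2 h')) hr

lemma conj_conj {G : Type} [Group G] {g h : G} (hc : IsConj g h) (y : G) : IsConj g (y * h * y⁻¹) :=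
  hc.trans (isConj_iff.2 ⟨y, rfl⟩)

lemma Delta_smul_mem {g : G} {z : R ⊗[k] Rᵐᵒᵖ} (hz : z ∈ Delta k S G act σ R cp ⊤)
    {r : R} (hr : r ∈ Rclass k S G act σ R cp g) : z • r ∈ Rclass k S G act σ R cp g := by
  refine Delta_induction (cp := cp) (H := ⊤)
    (p := fun z => z • r ∈ Rclass k S G act σ R cp g) ?_ ?_ ?_ hz
  · simp only [zsmul0, map_zero, zero_mem]
  · intro a b _ _ ha hb
    rw [add_smul]; exact add_mem ha hb
  · intro y _ z hz
    rw [← sum_pr_Cl hr, Finset.smul_sum]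
    refine Submodule.sum_mem _ fun h hh => ?_
    exact Sg_le (conj_conj (mem_Cl.1 hh) y) (hz.smul_mem (pr_mem cp h r))

open Classical in
/-- Chosen conjugators. -/
noncomputable def xr (g h : G) : G := if hh : IsConj g h then (isConj_iff.1 hh).choose else 1

lemma xr_spec {g h : G} (hh : IsConj g h) : xr g h * g * (xr g h)⁻¹ = h := by
  rw [xr, dif_pos hh]; exact (isConj_iff.1 hh).choose_spec

lemma xr_spec' {g h : G} (hh : IsConj g h) : (xr g h)⁻¹ * h * xr g h = g := by
  have h1 := mul_inv_eq_iff_eq_mul.1 (xr_spec hh)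
  rw [mul_assoc, ← h1, inv_mul_cancel_left]

variable (cp)

/-- `ū_x⁻¹ ⊗ ū_x`. -/
noncomputable def W0 (x : G) : R ⊗[k] Rᵐᵒᵖ :=
  (((cp.u x)⁻¹ : Rˣ) : R) ⊗ₜ[k] MulOpposite.op (cp.u x : R)

/-- `ū_x ⊗ ū_x⁻¹`. -/
noncomputable def V0 (x : G) : R ⊗[k] Rᵐᵒᵖ :=
  (cp.u x : R) ⊗ₜ[k] MulOpposite.op (((cp.u x)⁻¹ : Rˣ) : R)

lemma W0_Hm (x : G) : Hm cp x⁻¹ (W0 cp x) :=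
  ⟨_, inv_mem cp x, _, by rw [inv_inv]; exact u_mem cp x, rfl⟩

lemma V0_Hm (x : G) : Hm cp x (V0 cp x) :=
  ⟨_, u_mem cp x, _, inv_mem cp x, rfl⟩

/-- `W0` in `Δ`. -/
noncomputable def W (x : G) : ↥(Delta k S G act σ R cp ⊤) :=
  ⟨W0 cp x, (W0_Hm cp x).mem (Subgroup.mem_top _)⟩

/-- `V0` in `Δ`. -/
noncomputable def V (x : G) : ↥(Delta k S G act σ R cp ⊤) :=
  ⟨V0 cp x, (V0_Hm cp x).mem (Subgroup.mem_top _)⟩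

lemma VW0 (x : G) : V0 cp x * W0 cp x = 1 := by
  rw [V0, W0, Algebra.TensorProduct.tmul_mul_tmul, ← MulOpposite.op_mul, Units.mul_inv,
    MulOpposite.op_one]; rfl

lemma VW (x : G) : V cp x * W cp x = 1 := Subtype.ext (VW0 cp x)

variable {cp}

lemma pr_VW {g h : G} (hh : IsConj g h) (a : R) :
    V0 cp (xr g h) • CPaux.pr cp g (W0 cp (xr g h) • a) = CPaux.pr cp h a := by
  rw [← (V0_Hm cp (xr g h)).pr, xr_spec hh, ← mul_smul, VW0, one_smul]

lemma decomp {g : G} {a : R} (ha : a ∈ Rclass k S G act σ R cp g) :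
    ∑ h ∈ Cl g, V0 cp (xr g h) • CPaux.pr cp g (W0 cp (xr g h) • a) = a := by
  conv_rhs => rw [← sum_pr_Cl ha]
  exact Finset.sum_congr rfl fun h hh => pr_VW (mem_Cl.1 hh) a

lemma xr_cent {g h l : G} (hh : IsConj g h) (hl : IsConj g l) {y : G} (e : y * l * y⁻¹ = h) :
    (xr g h)⁻¹ * (y * xr g l) ∈ Subgroup.centralizer {g} := by
  rw [Subgroup.mem_centralizer_singleton_iff]
  have h1 := mul_inv_eq_iff_eq_mul.1 (xr_spec hh)
  have h2 := mul_inv_eq_iff_eq_mul.1 (xr_spec hl)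
  have h3 := mul_inv_eq_iff_eq_mul.1 e
  have h4 : g * (xr g h)⁻¹ = (xr g h)⁻¹ * h := by
    rw [eq_inv_mul_iff_mul_eq, ← mul_assoc, h1, mul_inv_cancel_right]
  rw [← mul_assoc g, h4]
  simp only [mul_assoc]
  rw [h2, ← mul_assoc y, h3]
  simp only [mul_assoc]

lemma coind_zero {g : G} {hle} (f : CoInd k S G act σ R cp g hle) : f.1 0 = 0 := by
  have := f.2.1 0 0
  simpa using this

/-- The inverse map applied to a coinduced function. -/
noncomputable def inv0 {g : G} {hle} (f : CoInd k S G act σ R cp g hle) : R :=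
  ∑ h ∈ Cl g, V0 cp (xr g h) • f.1 (W cp (xr g h))

lemma inv0_mem {g : G} {hle} (f : CoInd k S G act σ R cp g hle) :
    inv0 f ∈ Rclass k S G act σ R cp g := by
  refine Submodule.sum_mem _ fun h hh => ?_
  have := (V0_Hm cp (xr g h)).smul_mem (f.2.2.2.1 (W cp (xr g h)))
  rw [xr_spec (mem_Cl.1 hh)] at this
  exact Sg_le (mem_Cl.1 hh) this

lemma inv0_spec {g : G} {hle} (f : CoInd k S G act σ R cp g hle)
    (w : ↥(Delta k S G act σ R cp ⊤)) :
    CPaux.pr cp g ((w : R ⊗[k] Rᵐᵒᵖ) • inv0 f) = f.1 w := by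
  obtain ⟨w, hw⟩ := w
  refine Delta_induction (cp := cp) (H := ⊤)
    (p := fun w => ∀ hw : w ∈ Delta k S G act σ R cp ⊤,
      CPaux.pr cp g (w • inv0 f) = f.1 ⟨w, hw⟩) ?_ ?_ ?_ hw hw
  · intro h0
    rw [zsmul0, map_zero]
    exact (coind_zero f).symm
  · intro a b ha hb iha ihb hab
    rw [add_smul, map_add, iha ha, ihb hb, ← f.2.1]
    rfl
  · intro y _ w hwy hw
    rw [inv0, Finset.smul_sum, map_sum]
    have hcl : IsConj g (y⁻¹ * g * y) := by
      simpa using conj_conj (IsConj.refl g) y⁻¹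
    rw [Finset.sum_eq_single (y⁻¹ * g * y)]
    · set x := xr g (y⁻¹ * g * y) with hx
      have hc : y * x ∈ Subgroup.centralizer {g} := by
        rw [Subgroup.mem_centralizer_singleton_iff]
        have h1 := mul_inv_eq_iff_eq_mul.1 (xr_spec hcl)
        rw [← hx] at h1
        rw [mul_assoc, h1]
        group
      have hmem := (hwy.mul (V0_Hm cp x)).mem hc
      rw [← mul_smul, pr_cent hmem, pr_self cp (f.2.2.2.1 _)]
      have := f.2.2.2.2 ⟨_, hmem⟩ (W cp x)
      refine this.symm.trans ?_
      refine congrArg f.1 (Subtype.ext ?_)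
      change w * V0 cp x * W0 cp x = w
      rw [mul_assoc, VW0, mul_one]
    · intro h hh hne
      have h1 := hwy.smul_mem ((V0_Hm cp (xr g h)).smul_mem (f.2.2.2.1 (W cp (xr g h))))
      rw [xr_spec (mem_Cl.1 hh)] at h1
      refine pr_ne cp h1 ?_
      intro e
      apply hne
      rw [e]; group
    · intro h; exact absurd (mem_Cl.2 hcl) h

lemma mem_Sg_of_pr (g : G) (r : R) : CPaux.pr cp g r ∈ SgSpan k S G act σ R cp g := pr_mem cp g r

section ind

variable {g : G}
  {hle : Delta k S G act σ R cp (Subgroup.centralizer {g}) ≤ Delta k S G act σ R cp ⊤}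
  {M : Type} [AddCommGroup M] [Module ↥(Delta k S G act σ R cp ⊤) M]
  (φ : ↥(SgSpan k S G act σ R cp g) →+ M)

/-- The extension of `φ`, on all of `R`. -/
noncomputable def ext0 (a : R) : M :=
  ∑ h ∈ Cl g, V cp (xr g h) • φ ⟨CPaux.pr cp g (W0 cp (xr g h) • a), pr_mem cp g _⟩

lemma ext0_add (a b : R) : ext0 φ (a + b) = ext0 φ a + ext0 φ b := by
  rw [ext0, ext0, ext0, ← Finset.sum_add_distrib]
  refine Finset.sum_congr rfl fun h _ => ?_
  rw [← smul_add, ← map_add]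
  congr 2
  refine Subtype.ext ?_
  simp only [smul_add, map_add, Submodule.coe_add]

variable {φ}
variable (hle φ) in
/-- `Δ(C(g))`-linearity of `φ`. -/
def IsLin : Prop := ∀ (z : ↥(Delta k S G act σ R cp (Subgroup.centralizer {g})))
        (v : ↥(SgSpan k S G act σ R cp g))
        (hv : ((z : R ⊗[k] Rᵐᵒᵖ)) • (v : R) ∈ SgSpan k S G act σ R cp g),
        φ ⟨((z : R ⊗[k] Rᵐᵒᵖ)) • (v : R), hv⟩ = Subalgebra.inclusion hle z • φ v

lemma ext0_aux (hφ : IsLin hle φ) {y : G} {z : R ⊗[k] Rᵐᵒᵖ} (hz : Hm cp y z)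
    (hz' : z ∈ Delta k S G act σ R cp ⊤) (a : R) {xh xl : G}
    (hc : xh⁻¹ * (y * xl) ∈ Subgroup.centralizer {g}) :
    (⟨z, hz'⟩ : ↥(Delta k S G act σ R cp ⊤)) • V cp xl •
      φ ⟨CPaux.pr cp g (W0 cp xl • a), pr_mem cp g _⟩ =
    V cp xh • φ ⟨CPaux.pr cp g (W0 cp xh • z • a), pr_mem cp g _⟩ := by
  have hmem := ((W0_Hm cp xh).mul (hz.mul (V0_Hm cp xl))).mem hc
  have e1 : W0 cp xh • z • a = (W0 cp xh * (z * V0 cp xl)) • (W0 cp xl • a) := by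
    rw [← mul_smul, ← mul_smul, mul_assoc, mul_assoc, VW0, mul_one]
  have e2 : CPaux.pr cp g (W0 cp xh • z • a) =
      (W0 cp xh * (z * V0 cp xl)) • CPaux.pr cp g (W0 cp xl • a) := by
    rw [e1, pr_cent hmem]
  have e3 := hφ ⟨_, hmem⟩ ⟨CPaux.pr cp g (W0 cp xl • a), pr_mem cp g _⟩
    (cent_smul_mem hmem (pr_mem cp g _))
  simp only [e2]
  refine Eq.trans ?_ (congrArg (fun m => V cp xh • m) e3.symm)
  rw [← mul_smul, ← mul_smul]
  congr 1
  refine Subtype.ext ?_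
  change z * V0 cp xl = V0 cp xh * (W0 cp xh * (z * V0 cp xl))
  rw [← mul_assoc (V0 cp xh), VW0, one_mul]

lemma ext0_hom (hφ : IsLin hle φ) {y : G} {z : R ⊗[k] Rᵐᵒᵖ} (hz : Hm cp y z)
    (hz' : z ∈ Delta k S G act σ R cp ⊤) (a : R) :
    ext0 φ (z • a) = (⟨z, hz'⟩ : ↥(Delta k S G act σ R cp ⊤)) • ext0 φ a := by
  rw [ext0, ext0, Finset.smul_sum]
  symm
  refine Finset.sum_equiv (MulAut.conj y).toEquiv ?_ ?_
  · intro l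
    simp only [mem_Cl, MulEquiv.toEquiv_eq_coe, EquivLike.coe_coe, MulAut.conj_apply]
    constructor
    · intro h; exact conj_conj h y
    · intro h
      have := conj_conj h y⁻¹
      simpa [mul_assoc] using this
  · intro l hl
    rw [mem_Cl] at hl
    simp only [MulEquiv.toEquiv_eq_coe, EquivLike.coe_coe, MulAut.conj_apply]
    have hh : IsConj g (y * l * y⁻¹) := conj_conj hl y
    have hc := xr_cent hh hl rfl
    exact ext0_aux hφ hz hz' a hc

lemma ext0_smul (hφ : IsLin hle φ) (z : ↥(Delta k S G act σ R cp ⊤)) (a : R) :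
    ext0 φ ((z : R ⊗[k] Rᵐᵒᵖ) • a) = z • ext0 φ a := by
  obtain ⟨z, hz⟩ := z
  refine Delta_induction (cp := cp) (H := ⊤)
    (p := fun z => ∀ hz : z ∈ Delta k S G act σ R cp ⊤,
      ext0 φ (z • a) = (⟨z, hz⟩ : ↥(Delta k S G act σ R cp ⊤)) • ext0 φ a) ?_ ?_ ?_ hz hz
  · intro h0
    have e : ext0 φ (0 : R) = 0 := by simpa using ext0_add φ 0 0
    rw [zsmul0, e]
    exact (zero_smul _ _).symm
  · intro b c hb hc ihb ihc hbc
    rw [add_smul, ext0_add, ihb hb, ihc hc, ← add_smul]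
    rfl
  · intro y _ w hwy hw
    exact ext0_hom hφ hwy hw a

lemma ext0_res (hφ : IsLin hle φ) (v : ↥(SgSpan k S G act σ R cp g)) : ext0 φ (v : R) = φ v := by
  rw [ext0, Finset.sum_eq_single g]
  · have hc : (xr g g)⁻¹ ∈ Subgroup.centralizer {g} := by
      refine Subgroup.inv_mem _ ?_
      rw [Subgroup.mem_centralizer_singleton_iff]
      exact mul_inv_eq_iff_eq_mul.1 (xr_spec (IsConj.refl g))
    have hmem := (W0_Hm cp (xr g g)).mem hc
    have e3 := hφ ⟨_, hmem⟩ v (cent_smul_mem hmem v.2)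
    have e2 : CPaux.pr cp g (W0 cp (xr g g) • (v : R)) = W0 cp (xr g g) • (v : R) := by
      rw [pr_cent hmem, pr_self cp v.2]
    simp only [e2]
    refine (congrArg (fun m => V cp (xr g g) • m) e3).trans ?_
    rw [← mul_smul]
    have : V cp (xr g g) * Subalgebra.inclusion hle ⟨_, hmem⟩ = 1 := Subtype.ext (VW0 cp _)
    rw [this, one_smul]
  · intro h hh hne
    have h1 := (W0_Hm cp (xr g h)).smul_mem v.2
    have e : CPaux.pr cp g (W0 cp (xr g h) • (v : R)) = 0 := by
      refine pr_ne cp h1 ?_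
      intro e
      apply hne
      rw [inv_inv] at e
      rw [← xr_spec (mem_Cl.1 hh)]
      rw [mul_assoc, eq_inv_mul_iff_mul_eq] at e
      rw [e, mul_inv_cancel_right]
    simp only [e]
    have : φ ⟨0, zero_mem _⟩ = 0 := map_zero φ
    rw [this, smul_zero]
  · intro h; exact absurd (mem_Cl.2 (IsConj.refl g)) h

end ind

end CPaux
end helpers

/-- **Step in the proof of Lemma 3.1**: for a crossed product `R = S #_σ G`, `g ∈ G`
with centralizer `C(g)` and conjugacy class `C`, the `Δ`-module `R_C = ⊕_{h ∈ C} S·h̄`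
is isomorphic both to the induced module `Δ ⊗_{Δ(C(g))} S·ḡ` (expressed below by the
universal property of induction) and to the coinduced module `Hom_{Δ(C(g))}(Δ, S·ḡ)`
(where `Δ` acts on the latter by `((r₀⊗r₁)·f)(s₀⊗s₁) = f(s₀r₀ ⊗ r₁s₁)`, i.e.
`(z·f)(w) = f(wz)`); an explicit `Δ`-module isomorphism `R_C → Hom_{Δ(C(g))}(Δ, S·ḡ)`
is given by `h̄ r ḡ (h̄)⁻¹ ↦ (((h̄)⁻¹ ⊗ h̄) ↦ r·ḡ)`, for `h` ranging over a set of coset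
representatives for `C(g)` in `G`. -/
theorem Rclass_induced_coinduced
    (k : Type) [Field k] (S : Type) [Ring S] [Algebra k S]
    (G : Type) [Group G] [Fintype G]
    (act : G →* (S ≃ₐ[k] S)) (σ : G → G → S)
    (R : Type) [Ring R] [Algebra k R]
    (cp : CrossedProduct k S G act σ R) (g : G)
    (hle : Delta k S G act σ R cp (Subgroup.centralizer {g}) ≤ Delta k S G act σ R cp ⊤) :
    -- (1) `R_C` is isomorphic to the coinduced module, via the explicit map
    (∃ Φ : ↥(Rclass k S G act σ R cp g) → CoInd k S G act σ R cp g hle,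
      Function.Bijective Φ ∧
      -- additivity
      (∀ (a b : ↥(Rclass k S G act σ R cp g)) (w : ↥(Delta k S G act σ R cp ⊤)),
        (Φ (a + b)).1 w = (Φ a).1 w + (Φ b).1 w) ∧
      -- `Δ`-equivariance, for the action `(z·f)(w) = f(wz)` on the coinduced module
      (∀ (z : ↥(Delta k S G act σ R cp ⊤)) (a : ↥(Rclass k S G act σ R cp g))
        (ha : ((z : R ⊗[k] Rᵐᵒᵖ)) • (a : R) ∈ Rclass k S G act σ R cp g)
        (w : ↥(Delta k S G act σ R cp ⊤)),
        (Φ ⟨((z : R ⊗[k] Rᵐᵒᵖ)) • (a : R), ha⟩).1 w = (Φ a).1 (w * z)) ∧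
      -- the explicit formula `h̄ r ḡ (h̄)⁻¹ ↦ (((h̄)⁻¹ ⊗ h̄) ↦ r·ḡ)`
      (∀ (h : G) (r : S) (a : ↥(Rclass k S G act σ R cp g)),
        (a : R) = (cp.u h : R) * cp.emb r * (cp.u g : R) * (((cp.u h)⁻¹ : Rˣ) : R) →
        ∀ w : ↥(Delta k S G act σ R cp ⊤),
          (w : R ⊗[k] Rᵐᵒᵖ)
              = ((((cp.u h)⁻¹ : Rˣ) : R)) ⊗ₜ[k] (MulOpposite.op ((cp.u h : R))) →
          (Φ a).1 w = cp.emb r * (cp.u g : R))) ∧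
    -- (2) `S·ḡ ⊆ R_C`, and `R_C` together with this inclusion is the induced module
    -- `Δ ⊗_{Δ(C(g))} S·ḡ`, i.e. it satisfies the universal property of induction
    SgSpan k S G act σ R cp g ≤ Rclass k S G act σ R cp g ∧
    (∀ (M : Type) [AddCommGroup M] [Module ↥(Delta k S G act σ R cp ⊤) M]
      (φ : ↥(SgSpan k S G act σ R cp g) →+ M),
      (∀ (z : ↥(Delta k S G act σ R cp (Subgroup.centralizer {g})))
        (v : ↥(SgSpan k S G act σ R cp g))
        (hv : ((z : R ⊗[k] Rᵐᵒᵖ)) • (v : R) ∈ SgSpan k S G act σ R cp g),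
        φ ⟨((z : R ⊗[k] Rᵐᵒᵖ)) • (v : R), hv⟩ = Subalgebra.inclusion hle z • φ v) →
      ∃! Φ' : ↥(Rclass k S G act σ R cp g) →+ M,
        (∀ (z : ↥(Delta k S G act σ R cp ⊤)) (a : ↥(Rclass k S G act σ R cp g))
          (ha : ((z : R ⊗[k] Rᵐᵒᵖ)) • (a : R) ∈ Rclass k S G act σ R cp g),
          Φ' ⟨((z : R ⊗[k] Rᵐᵒᵖ)) • (a : R), ha⟩ = z • Φ' a) ∧
        (∀ (v : ↥(SgSpan k S G act σ R cp g)) (hv : (v : R) ∈ Rclass k S G act σ R cp g),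
          Φ' ⟨(v : R), hv⟩ = φ v)) := by
  refine ⟨⟨fun a => ⟨fun w => CPaux.pr cp g ((w : R ⊗[k] Rᵐᵒᵖ) • (a : R)),
    ?_, ?_, ?_, ?_⟩, ⟨?_, ?_⟩, ?_, ?_, ?_⟩, CPaux.Sg_le (IsConj.refl g), ?_⟩
  · intro w w'
    beta_reduce
    rw [Subalgebra.coe_add, add_smul, map_add]
  · intro c w
    have h : ((c • w : ↥(Delta k S G act σ R cp ⊤)) : R ⊗[k] Rᵐᵒᵖ) • (a : R)
        = c • ((w : R ⊗[k] Rᵐᵒᵖ) • (a : R)) := by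
      rw [Subalgebra.coe_smul]
      generalize (w : R ⊗[k] Rᵐᵒᵖ) = w
      induction w using TensorProduct.induction_on with
      | zero => rw [smul_zero, CPaux.zsmul0, smul_zero]
      | add x y hx hy => rw [smul_add, add_smul, hx, hy, add_smul, smul_add]
      | tmul x y =>
        induction y using MulOpposite.rec' with
        | _ y =>
        rw [TensorProduct.smul_tmul', CPaux.smul_def, CPaux.smul_def, smul_mul_assoc,
          smul_mul_assoc]
    beta_reduce
    rw [h, map_smul]
  · intro w
    exact CPaux.pr_mem cp g _
  · intro z w
    have h : ((Subalgebra.inclusion hle z * w : ↥(Delta k S G act σ R cp ⊤)) : R ⊗[k] Rᵐᵒᵖ)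
        = (z : R ⊗[k] Rᵐᵒᵖ) * (w : R ⊗[k] Rᵐᵒᵖ) := rfl
    beta_reduce
    rw [h, mul_smul, CPaux.pr_cent z.2]
  · intro a b hab
    have h : ∀ w : ↥(Delta k S G act σ R cp ⊤),
        CPaux.pr cp g ((w : R ⊗[k] Rᵐᵒᵖ) • (a : R)) =
        CPaux.pr cp g ((w : R ⊗[k] Rᵐᵒᵖ) • (b : R)) := fun w =>
      congrFun (congrArg Subtype.val hab) w
    refine Subtype.ext ?_
    rw [← CPaux.decomp a.2, ← CPaux.decomp b.2]
    refine Finset.sum_congr rfl fun l _ => ?_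
    exact congrArg _ (h (CPaux.W cp (CPaux.xr g l)))
  · intro f
    refine ⟨⟨CPaux.inv0 f, CPaux.inv0_mem f⟩, Subtype.ext (funext fun w => ?_)⟩
    exact CPaux.inv0_spec f w
  · intro a b w
    change CPaux.pr cp g ((w : R ⊗[k] Rᵐᵒᵖ) • ((a : R) + (b : R))) = _
    rw [smul_add, map_add]
  · intro z a ha w
    change CPaux.pr cp g ((w : R ⊗[k] Rᵐᵒᵖ) • ((z : R ⊗[k] Rᵐᵒᵖ) • (a : R))) =
      CPaux.pr cp g (((w : R ⊗[k] Rᵐᵒᵖ) * (z : R ⊗[k] Rᵐᵒᵖ)) • (a : R))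
    rw [mul_smul]
  · intro h r a ha w hw
    change CPaux.pr cp g ((w : R ⊗[k] Rᵐᵒᵖ) • (a : R)) = _
    have e : (w : R ⊗[k] Rᵐᵒᵖ) • (a : R) = cp.emb r * (cp.u g : R) := by
      rw [hw, ha, CPaux.smul_def]
      simp only [mul_assoc, Units.inv_mul, mul_one, Units.inv_mul_cancel_left]
    rw [e]
    exact CPaux.pr_self cp ((CPaux.mem_Sg cp g _).2 ⟨r, rfl⟩)
  · intro M _ _ φ hφ
    refine ⟨AddMonoidHom.mk' (fun a => CPaux.ext0 φ (a : R)) ?_, ⟨?_, ?_⟩, ?_⟩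
    · intro a b
      exact CPaux.ext0_add φ a b
    · intro z a ha
      exact CPaux.ext0_smul hφ z a
    · intro v hv
      exact CPaux.ext0_res hφ v
    · rintro Ψ ⟨h1, h2⟩
      ext a
      change Ψ a = CPaux.ext0 φ (a : R)
      have hm : ∀ l, CPaux.pr cp g (CPaux.W0 cp (CPaux.xr g l) • (a : R)) ∈
          Rclass k S G act σ R cp g := fun l =>
        CPaux.Sg_le (IsConj.refl g) (CPaux.pr_mem cp g _)
      have hm' : ∀ l, CPaux.V0 cp (CPaux.xr g l) •
          CPaux.pr cp g (CPaux.W0 cp (CPaux.xr g l) • (a : R)) ∈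
          Rclass k S G act σ R cp g := fun l =>
        CPaux.Delta_smul_mem (CPaux.V cp (CPaux.xr g l)).2 (hm l)
      have e : a = ∑ l ∈ CPaux.Cl g, (⟨_, hm' l⟩ : ↥(Rclass k S G act σ R cp g)) := by
        refine Subtype.ext ?_
        rw [Submodule.coe_sum]
        exact (CPaux.decomp a.2).symm
      conv_lhs => rw [e]
      rw [map_sum, CPaux.ext0]
      refine Finset.sum_congr rfl fun l _ => ?_
      have h3 := h1 (CPaux.V cp (CPaux.xr g l)) ⟨_, hm l⟩ (hm' l)
      refine h3.trans ?_
      congr 1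
      exact h2 ⟨_, CPaux.pr_mem cp g _⟩ (hm l)
end

section
/- Let H = (kG)*#_σ^τ L, g ∈ G, L_g the stabilizer of g in L, and H_g = (kG)*#_σ L_g. Let H_g ⊗_{(kG)*} k·p_g be the H_g-module induced from the simple (kG)*-module k·p_g, and let E := End_{H_g}(H_g ⊗_{(kG)*} k·p_g)^{op} be its endomorphism algebra with multiplication opposite to composition. Then E is isomorphic as a k-algebra to the twisted group algebra k_{σ_g}L_g, via the map sending x̄ to the endomorphism φ_x determined by φ_x(1 ⊗ p_g) = x̄ ⊗ p_g. -/
/-- A presentation of the twisted group algebra `k_β W` of a group `W` over a field `k`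
with respect to a `k^×`-valued two-cocycle `β`. -/
structure TwistedGroupAlgebra (k : Type) [Field k] (W : Type) [Group W]
    (β : W → W → kˣ) (T : Type) [Ring T] [Algebra k T] where
  bar : W → T
  basis : Function.Bijective fun f : W →₀ k => f.sum fun x a => a • bar x
  bar_mul : ∀ x y : W, bar x * bar y = ((β x y : k)) • bar (x * y)
  bar_one : bar 1 = 1

/-- A presentation of the crossed product algebra `H = (kG)* #_σ L` attached to an action
of a finite group `L` on a finite group `G` by automorphisms: `H` has `k`-basis
`{p_g x̄ : g ∈ G, x ∈ L}` with multiplication `(p_g x̄)(p_h ȳ) = δ_{g,ˣh} σ_g(x,y) p_g (xy)‾`. -/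
structure DualCrossedProduct (k : Type) [Field k] (L G : Type) [Group L] [Group G]
    [Fintype L] [Fintype G] [DecidableEq G] [MulDistribMulAction L G]
    (σc : G → L → L → kˣ) (H : Type) [Ring H] [Algebra k H] where
  /-- the basis element `p_g x̄` -/
  P : G → L → H
  /-- `{p_g x̄}` is a `k`-basis of `H` -/
  basis : Function.Bijective fun f : G × L → k => ∑ p : G × L, f p • P p.1 p.2
  /-- the multiplication rule `(p_g x̄)(p_h ȳ) = δ_{g,ˣh} σ_g(x,y) p_g (xy)‾` -/
  mul_P : ∀ (g h : G) (x y : L),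
    P g x * P h y = if g = x • h then ((σc g x y : k)) • P g (x * y) else 0
  /-- `Σ_g p_g 1̄ = 1` -/
  sum_P_one : ∑ g : G, P g 1 = 1

variable (k : Type) [Field k] (L G : Type) [Group L] [Group G]
  [Fintype L] [Fintype G] [DecidableEq G] [MulDistribMulAction L G]
  (σc : G → L → L → kˣ) (H : Type) [Ring H] [Algebra k H]

/-- The subalgebra `H_g = (kG)* #_σ L_g` of `H = (kG)* #_σ L`, spanned by the
elements `p_h x̄` with `h ∈ G` and `x ∈ L_g`. -/
noncomputable def Hg (hp : DualCrossedProduct k L G σc H) (g : G) : Subalgebra k H :=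
  Algebra.adjoin k {z | ∃ (h : G) (x : L), x ∈ MulAction.stabilizer L g ∧ z = hp.P h x}

/-- **Lemma 4.2**: for `H = (kG)* #_σ^τ L` and `g ∈ G`, let
`M = H_g ⊗_{(kG)*} k·p_g` be the `H_g`-module induced from the simple `(kG)*`-module
`k·p_g` (it has `k`-basis `{x̄ ⊗ p_g : x ∈ L_g}`, with
`(p_h x̄)·(ȳ ⊗ p_g) = δ_{h,g} σ_g(x,y) (xy)‾ ⊗ p_g`), and let
`E = End_{H_g}(M)^{op}` be its endomorphism algebra with multiplication opposite to
composition.  Then `E ≅ k_{σ_g} L_g` as `k`-algebras, the isomorphism sending `x̄` to the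
endomorphism `φ_x` determined by `φ_x(1 ⊗ p_g) = x̄ ⊗ p_g`. -/
theorem endomorphism_algebra_of_induced_module
    (hp : DualCrossedProduct k L G σc H) (g : G)
    (M : Type) [AddCommGroup M] [Module k M]
    [Module (Hg k L G σc H hp g) M] [IsScalarTower k (Hg k L G σc H hp g) M]
    [SMulCommClass (Hg k L G σc H hp g) k M]
    -- `M` has `k`-basis `{ȳ ⊗ p_g : y ∈ L_g}` …
    (q : ↥(MulAction.stabilizer L g) → M)
    (hq : Function.Bijective fun f : ↥(MulAction.stabilizer L g) →₀ k =>
      f.sum fun x a => a • q x)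
    -- … on which `H_g` acts by `(p_h x̄)·(ȳ ⊗ p_g) = δ_{h,g} σ_g(x,y) (xy)‾ ⊗ p_g`
    (hact : ∀ (h : G) (x y : ↥(MulAction.stabilizer L g)),
      (⟨hp.P h x, Algebra.subset_adjoin ⟨h, x, x.2, rfl⟩⟩ : Hg k L G σc H hp g) • q y
        = if h = g then ((σc g x y : k)) • q (x * y) else 0)
    -- a twisted group algebra `k_{σ_g} L_g`
    (T : Type) [Ring T] [Algebra k T]
    (A₁ : TwistedGroupAlgebra k (↥(MulAction.stabilizer L g)) (fun x y => σc g x y) T) :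
    -- then `E = End_{H_g}(M)^{op} ≅ k_{σ_g} L_g`, via `x̄ ↦ φ_x` with `φ_x(1⊗p_g) = x̄⊗p_g`
    ∃ Φ : T ≃ₐ[k] (Module.End (Hg k L G σc H hp g) M)ᵐᵒᵖ,
      ∀ x : ↥(MulAction.stabilizer L g), ((Φ (A₁.bar x)).unop) (q 1) = q x := by
  classical
  -- the linear isomorphism `T ≃ M`, `x̄ ↦ q x`
  let bT : (↥(MulAction.stabilizer L g) →₀ k) ≃ₗ[k] T :=
    LinearEquiv.ofBijective (Finsupp.linearCombination k A₁.bar) A₁.basis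
  let bM : (↥(MulAction.stabilizer L g) →₀ k) ≃ₗ[k] M :=
    LinearEquiv.ofBijective (Finsupp.linearCombination k q) hq
  let e : T ≃ₗ[k] M := bT.symm.trans bM
  have hT : ∀ x, bT (Finsupp.single x 1) = A₁.bar x := fun x => by
    exact (Finsupp.linearCombination_single k (1 : k) x).trans (one_smul k _)
  have hM : ∀ x, bM (Finsupp.single x 1) = q x := fun x => by
    exact (Finsupp.linearCombination_single k (1 : k) x).trans (one_smul k _)
  have he : ∀ x, e (A₁.bar x) = q x := fun x => by
    rw [← hT, ← hM]; simp [e]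
  -- induction principle for `T`
  have indT : ∀ p : T → Prop, (∀ x, p (A₁.bar x)) → (∀ s t, p s → p t → p (s + t)) →
      (∀ (c : k) t, p t → p (c • t)) → p 0 → ∀ t, p t := by
    intro p h1 h2 h3 h0 t
    obtain ⟨f, rfl⟩ := bT.surjective t
    induction f using Finsupp.induction_linear with
    | zero => simpa using h0
    | add f f' hf hf' => rw [map_add]; exact h2 _ _ hf hf'
    | single x c =>
      have : Finsupp.single x c = c • Finsupp.single x (1 : k) := by simp
      rw [this, map_smul, hT]; exact h3 _ _ (h1 x)
  -- generators act by left multiplication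
  have hgen : ∀ (h : G) (x : ↥(MulAction.stabilizer L g)) (s : T),
      (⟨hp.P h x, Algebra.subset_adjoin ⟨h, x, x.2, rfl⟩⟩ : Hg k L G σc H hp g) • e s
        = e ((if h = g then A₁.bar x else 0) * s) := by
    intro h x s
    refine indT (fun s =>
      (⟨hp.P h x, Algebra.subset_adjoin ⟨h, x, x.2, rfl⟩⟩ : Hg k L G σc H hp g) • e s
        = e ((if h = g then A₁.bar x else 0) * s)) ?_ ?_ ?_ ?_ s
    · intro y
      rw [he, hact]
      split_ifs
      · rw [A₁.bar_mul, map_smul, he]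
      · simp
    · intro s t hs ht
      rw [map_add, smul_add, hs, ht, mul_add, map_add]
    · intro c t ht
      rw [map_smul, smul_comm, ht, mul_smul_comm, map_smul]
    · simp
  have hL : ∀ a : Hg k L G σc H hp g, ∃ t : T, ∀ s, a • e s = e (t * s) := by
    rintro ⟨a, ha⟩
    induction ha using Algebra.adjoin_induction with
    | mem z hz =>
      obtain ⟨h, x, hx, rfl⟩ := hz
      exact ⟨_, hgen h ⟨x, hx⟩⟩
    | algebraMap c =>
      refine ⟨c • 1, fun s => ?_⟩
      rw [smul_mul_assoc, one_mul, map_smul]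
      exact algebraMap_smul (Hg k L G σc H hp g) c (e s)
    | add a b ha hb iha ihb =>
      obtain ⟨t, ht⟩ := iha
      obtain ⟨u, hu⟩ := ihb
      refine ⟨t + u, fun s => ?_⟩
      rw [add_mul, map_add, ← ht, ← hu, ← add_smul]
      rfl
    | mul a b ha hb iha ihb =>
      obtain ⟨t, ht⟩ := iha
      obtain ⟨u, hu⟩ := ihb
      refine ⟨t * u, fun s => ?_⟩
      rw [mul_assoc, ← ht, ← hu, ← mul_smul]
      rfl
  have hR : ∀ t : T, ∃ a : Hg k L G σc H hp g, ∀ s, a • e s = e (t * s) := by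
    refine indT _ ?_ ?_ ?_ ?_
    · intro x
      refine ⟨_, fun s => (hgen g x s).trans ?_⟩
      rw [if_pos rfl]
    · rintro s t ⟨a, ha⟩ ⟨b, hb⟩
      exact ⟨a + b, fun u => by rw [add_smul, ha, hb, add_mul, map_add]⟩
    · rintro c t ⟨a, ha⟩
      exact ⟨c • a, fun u => by rw [smul_assoc, ha, smul_mul_assoc, map_smul]⟩
    · exact ⟨0, fun u => by simp⟩
  -- right multiplication
  let φ : T → Module.End (Hg k L G σc H hp g) M := fun t =>
    { toFun := fun m => e (e.symm m * t)
      map_add' := fun m n => by rw [map_add, add_mul, map_add]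
      map_smul' := fun a m => by
        obtain ⟨u, hu⟩ := hL a
        obtain ⟨s, rfl⟩ := e.surjective m
        simp only [RingHom.id_apply]
        rw [hu, e.symm_apply_apply, e.symm_apply_apply, hu, mul_assoc] }
  have hφ : ∀ t m, φ t m = e (e.symm m * t) := fun _ _ => rfl
  let Φ : T →ₐ[k] (Module.End (Hg k L G σc H hp g) M)ᵐᵒᵖ := AlgHom.ofLinearMap
    { toFun := fun t => MulOpposite.op (φ t)
      map_add' := fun s t => by
        rw [← MulOpposite.op_add]; congr 1; ext m
        rw [LinearMap.add_apply, hφ, hφ, hφ, mul_add, map_add]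
      map_smul' := fun c t => by
        rw [RingHom.id_apply, ← MulOpposite.op_smul]; congr 1; ext m
        rw [LinearMap.smul_apply, hφ, hφ, mul_smul_comm, map_smul] }
    (by
      change MulOpposite.op (φ 1) = 1
      rw [← MulOpposite.op_one]; congr 1; ext m
      rw [hφ, mul_one, e.apply_symm_apply]; rfl)
    (fun s t => by
      change MulOpposite.op (φ (s * t)) = MulOpposite.op (φ s) * MulOpposite.op (φ t)
      rw [← MulOpposite.op_mul]; congr 1; ext m
      rw [Module.End.mul_apply, hφ, hφ, hφ, e.symm_apply_apply, mul_assoc])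
  have hΦ : ∀ t, (Φ t).unop = φ t := fun _ => rfl
  have he1 : q 1 = e 1 := by rw [← he, A₁.bar_one]
  have hbij : Function.Bijective Φ := by
    constructor
    · intro s t hst
      have h1 : φ s = φ t := by rw [← hΦ, ← hΦ, hst]
      have h2 : φ s (e 1) = φ t (e 1) := by rw [h1]
      rw [hφ, hφ, e.symm_apply_apply, one_mul, one_mul] at h2
      exact e.injective h2
    · intro ψ
      refine ⟨e.symm (ψ.unop (e 1)), MulOpposite.unop_injective ?_⟩
      rw [hΦ]; ext m
      obtain ⟨s, rfl⟩ := e.surjective m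
      obtain ⟨a, ha⟩ := hR s
      rw [hφ, e.symm_apply_apply, ← ha, e.apply_symm_apply, ← map_smul, ha, mul_one]
  refine ⟨AlgEquiv.ofBijective Φ hbij, fun x => ?_⟩
  rw [AlgEquiv.coe_ofBijective, hΦ, he1, hφ, e.symm_apply_apply, one_mul, he]
end

section
/- Let H = (kG)*#_σ^τ L and let g_1,…,g_t be representatives of the orbits of L on G, with p_i := p_{g_i}, σ_i := σ_{g_i}, L_i := L_{g_i}, H_i := H_{g_i}. The simple H-modules are precisely the induced modules V̂ := H ⊗_{H_i}(p_i ⊗ V), where V ranges over the simple k_{σ_i}L_i-modules and i ranges over {1,…,t}; here V' := p_i ⊗ V is the H_i-module with action (p_h x̄)(p_i ⊗ v) = δ_{g_i,h} p_i ⊗ x̄·v. That is, each such V̂ is a simple H-module, and every simple H-module arises this way. -/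
section

variable (k : Type) [Field k] (L G : Type) [Group L] [Group G]
  [Fintype L] [Fintype G] [DecidableEq G] [MulDistribMulAction L G]
  (σc : G → L → L → kˣ) (H : Type) [Ring H] [Algebra k H]

/-- A projective representation of `L_g` on `V` with cocycle `σ_g`, i.e. a
`k_{σ_g}L_g`-module structure on `V`. -/
def IsProjRep (g : G) (V : Type) [AddCommGroup V] [Module k V]
    (ρ : ↥(MulAction.stabilizer L g) → V →ₗ[k] V) : Prop :=
  ρ 1 = LinearMap.id ∧
    ∀ x y : ↥(MulAction.stabilizer L g), (ρ x).comp (ρ y) = ((σc g x y : k)) • ρ (x * y)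

/-- Simplicity of a `k_{σ_g}L_g`-module `(V, ρ)`. -/
def IsSimpleRep (g : G) (V : Type) [AddCommGroup V] [Module k V]
    (ρ : ↥(MulAction.stabilizer L g) → V →ₗ[k] V) : Prop :=
  (∃ v : V, v ≠ 0) ∧
    ∀ U : Submodule k V, (∀ x, ∀ v ∈ U, ρ x v ∈ U) → U = ⊥ ∨ U = ⊤

/-- `X ≅ V̂ = H ⊗_{H_g} (p_g ⊗ V)`: the `H`-module `X` is (isomorphic to) the module
induced from the `H_g`-module `V' = p_g ⊗ V`, on which `H_g` acts by
`(p_h x̄)(p_g ⊗ v) = δ_{g,h} p_g ⊗ x̄·v`.  This is witnessed by a `k`-linear embedding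
`ε : V → X` (with image `p_g ⊗ V`) such that `X` is generated by `ε(V)` over `H` and
`dim_k X = |L : L_g|·dim_k V`. -/
def IsInducedFrom (hp : DualCrossedProduct k L G σc H) (g : G)
    (V : Type) [AddCommGroup V] [Module k V]
    (ρ : ↥(MulAction.stabilizer L g) → V →ₗ[k] V)
    (X : Type) [AddCommGroup X] [Module k X] [Module H X] [IsScalarTower k H X] : Prop :=
  ∃ ε : V →ₗ[k] X, Function.Injective ε ∧
    (∀ (h : G) (x : ↥(MulAction.stabilizer L g)) (v : V),
      hp.P h x • ε v = if h = g then ε (ρ x v) else 0) ∧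
    Submodule.span H (Set.range ε) = ⊤ ∧
    Module.finrank k X = (MulAction.stabilizer L g).index * Module.finrank k V

end

namespace DCPaux

variable {k : Type} [Field k] {L G : Type} [Group L] [Group G]
  [Fintype L] [Fintype G] [DecidableEq G] [MulDistribMulAction L G]
  {σc : G → L → L → kˣ} {H : Type} [Ring H] [Algebra k H]

theorem P_ne_zero (hp : DualCrossedProduct k L G σc H) (g : G) (x : L) : hp.P g x ≠ 0 := by
  classical
  intro h0
  have h1 := @hp.basis.1 (Pi.single (g, x) 1) 0 (by
    simp [Pi.single_apply, ite_smul, h0])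
  have := congrFun h1 (g, x)
  simp at this

theorem sigma_one_left (hp : DualCrossedProduct k L G σc H) (g : G) (x : L) :
    (σc g 1 x : k) = 1 := by
  have h : (∑ h : G, hp.P h 1) * hp.P g x = hp.P g x := by rw [hp.sum_P_one, one_mul]
  rw [Finset.sum_mul] at h
  simp only [hp.mul_P, one_smul, one_mul, Finset.sum_ite_eq', Finset.mem_univ, if_true] at h
  have h2 : ((σc g 1 x : k) - 1) • hp.P g x = 0 := by rw [sub_smul, h, one_smul, sub_self]
  rcases smul_eq_zero.1 h2 with h3 | h3
  · exact sub_eq_zero.1 h3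
  · exact absurd h3 (P_ne_zero hp g x)

theorem sigma_one_right (hp : DualCrossedProduct k L G σc H) (g : G) (x : L) :
    (σc g x 1 : k) = 1 := by
  have h : hp.P g x * (∑ h : G, hp.P h 1) = hp.P g x := by rw [hp.sum_P_one, mul_one]
  rw [Finset.mul_sum, Finset.sum_eq_single (x⁻¹ • g)] at h
  · rw [hp.mul_P, if_pos (by simp), mul_one] at h
    have h2 : ((σc g x 1 : k) - 1) • hp.P g x = 0 := by rw [sub_smul, h, one_smul, sub_self]
    rcases smul_eq_zero.1 h2 with h3 | h3
    · exact sub_eq_zero.1 h3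
    · exact absurd h3 (P_ne_zero hp g x)
  · intro b _ hb
    rw [hp.mul_P, if_neg]
    rintro rfl
    simp at hb
  · simp

theorem one_mul_P (hp : DualCrossedProduct k L G σc H) (g h : G) (x : L) :
    hp.P g 1 * hp.P h x = if g = h then hp.P g x else 0 := by
  rw [hp.mul_P, sigma_one_left hp]; simp

theorem P_mul_one (hp : DualCrossedProduct k L G σc H) (g h : G) (x : L) :
    hp.P g x * hp.P h 1 = if g = x • h then hp.P g x else 0 := by
  rw [hp.mul_P, sigma_one_right hp]; simp

variable {X : Type} [AddCommGroup X] [Module k X] [Module H X] [IsScalarTower k H X]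

theorem proj_mem (hp : DualCrossedProduct k L G σc H) (g h0 : G) (W : Set X)
    (hW : ∀ w ∈ W, hp.P g 1 • w = w) (U : Submodule k X)
    (hU : ∀ x : L, h0 = x • g → ∀ w ∈ W, hp.P h0 x • w ∈ U) (n : X)
    (hn : n ∈ Submodule.span H W) : hp.P h0 1 • n ∈ U := by
  have key : ∀ a : H, hp.P h0 1 • a • n ∈ U := by
    induction hn using Submodule.span_induction with
    | mem w hw =>
      intro a
      obtain ⟨f, rfl⟩ := hp.basis.2 a
      simp only [Finset.sum_smul, Finset.smul_sum]
      refine U.sum_mem fun p _ => ?_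
      rw [smul_assoc, smul_comm]
      refine U.smul_mem _ ?_
      rw [← hW w hw, smul_smul, smul_smul, mul_assoc, P_mul_one]
      split_ifs with h1
      · rw [one_mul_P]
        split_ifs with h2
        · subst h2
          exact hU _ h1 w hw
        · simp
      · simp
    | zero => simp
    | add a b _ _ ha hb => intro c; rw [smul_add, smul_add]; exact U.add_mem (ha c) (hb c)
    | smul a b _ hb => intro c; rw [smul_smul c]; exact hb _
  simpa using key 1

theorem P_one_zero (hp : DualCrossedProduct k L G σc H) (g h : G) (x : L) (hx : h = x • g)
    (n : X) (hn : hp.P g x⁻¹ • n = 0) : hp.P h 1 • n = 0 := by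
  have h1 : hp.P h x • hp.P g x⁻¹ • n = 0 := by rw [hn, smul_zero]
  rw [smul_smul, hp.mul_P, if_pos hx, mul_inv_cancel, smul_assoc] at h1
  exact (smul_eq_zero.1 h1).resolve_left (Units.ne_zero _)

theorem eq_zero (hp : DualCrossedProduct k L G σc H) (n : X)
    (h : ∀ g, hp.P g 1 • n = 0) : n = 0 := by
  rw [← one_smul H n, ← hp.sum_P_one, Finset.sum_smul]
  exact Finset.sum_eq_zero fun g _ => h g

/-- A vector killed by all relevant `P g x` is zero when the module is generated in degree `g`. -/
theorem eq_zero_of_span (hp : DualCrossedProduct k L G σc H) (g : G) (W : Set X)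
    (hW : ∀ w ∈ W, hp.P g 1 • w = w) (hs : Submodule.span H W = ⊤) (n : X)
    (hn : ∀ h : G, h ∈ MulAction.orbit L g → ∃ x : L, h = x • g ∧ hp.P g x⁻¹ • n = 0) :
    n = 0 := by
  apply eq_zero hp
  intro h
  by_cases hh : h ∈ MulAction.orbit L g
  · obtain ⟨x, hx, h1⟩ := hn h hh
    exact P_one_zero hp g h x hx n h1
  · have := proj_mem (k := k) hp g h W hW ⊥
      (fun x hx => absurd ⟨x, hx.symm⟩ hh) n (by rw [hs]; trivial)
    simpa using this

theorem part1 (hp : DualCrossedProduct k L G σc H) (g : G)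
    (V : Type) [AddCommGroup V] [Module k V]
    (ρ : ↥(MulAction.stabilizer L g) → V →ₗ[k] V)
    (h1 : IsProjRep k L G σc g V ρ) (h2 : IsSimpleRep k L G g V ρ)
    (h3 : IsInducedFrom k L G σc H hp g V ρ X) : IsSimpleModule H X := by
  obtain ⟨ε, hinj, hact, hspan, -⟩ := h3
  obtain ⟨⟨v0, hv0⟩, hsimp⟩ := h2
  have hW : ∀ w ∈ Set.range ε, hp.P g 1 • w = w := by
    rintro _ ⟨v, rfl⟩
    have := hact g 1 v
    rw [if_pos rfl, h1.1] at this
    simpa using this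
  have hnt : Nontrivial X := ⟨ε v0, 0, fun h => hv0 (hinj (by rw [h, map_zero]))⟩
  rw [isSimpleModule_iff]
  refine { exists_pair_ne := ⟨⊥, ⊤, bot_ne_top⟩, eq_bot_or_eq_top := ?_ }
  intro N
  let Nk : Submodule k X := N.restrictScalars k
  rcases hsimp (Nk.comap ε) (by
    intro x v hv
    have h4 := hact g x v
    rw [if_pos rfl] at h4
    change ε (ρ x v) ∈ N
    rw [← h4]
    exact N.smul_mem _ hv) with hU | hU
  · left
    rw [eq_bot_iff]
    intro n hn
    have hker : ∀ m ∈ N, hp.P g 1 • m = 0 := by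
      intro m hm
      have h5 : hp.P g 1 • m ∈ LinearMap.range ε :=
        proj_mem (k := k) hp g g (Set.range ε) hW (LinearMap.range ε) (by
          rintro x hx _ ⟨v, rfl⟩
          have := hact g ⟨x, hx.symm⟩ v
          rw [if_pos rfl] at this
          exact ⟨_, this.symm⟩) m (by rw [hspan]; trivial)
      obtain ⟨v, hv⟩ := h5
      have h6 : v ∈ Nk.comap ε := by
        change ε v ∈ N
        rw [hv]; exact N.smul_mem _ hm
      rw [hU, Submodule.mem_bot] at h6
      rw [← hv, h6, map_zero]
    refine eq_zero_of_span hp g (Set.range ε) hW hspan n ?_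
    rintro h ⟨x, rfl⟩
    refine ⟨x, rfl, ?_⟩
    have := hker _ (N.smul_mem (hp.P g x⁻¹) hn)
    rwa [smul_smul, one_mul_P, if_pos rfl] at this
  · right
    rw [eq_top_iff, ← hspan, Submodule.span_le]
    rintro _ ⟨v, rfl⟩
    have : v ∈ Nk.comap ε := by rw [hU]; trivial
    exact this

/-- The homogeneous component `P g 1 • X`. -/
def comp (hp : DualCrossedProduct k L G σc H) (X : Type) [AddCommGroup X] [Module k X]
    [Module H X] [IsScalarTower k H X] (g : G) : Submodule k X where
  carrier := {v | hp.P g 1 • v = v}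
  add_mem' := by intro a b ha hb; simp only [Set.mem_ofPred_eq] at *; rw [smul_add, ha, hb]
  zero_mem' := by simp
  smul_mem' := by intro c a ha; simp only [Set.mem_ofPred_eq] at *; rw [smul_comm, ha]

theorem mem_comp (hp : DualCrossedProduct k L G σc H) (g : G) (v : X) :
    v ∈ comp hp X g ↔ hp.P g 1 • v = v := Iff.rfl

theorem smul_mem_comp (hp : DualCrossedProduct k L G σc H) (g : G) (x : L) (n : X) :
    hp.P g x • n ∈ comp hp X g := by
  rw [mem_comp, smul_smul, one_mul_P, if_pos rfl]

/-- `P g x` as a map from `X` to its component. -/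
def toComp (hp : DualCrossedProduct k L G σc H) (X : Type) [AddCommGroup X] [Module k X]
    [Module H X] [IsScalarTower k H X] (g : G) (x : L) : X →ₗ[k] comp hp X g where
  toFun n := ⟨hp.P g x • n, smul_mem_comp hp g x n⟩
  map_add' a b := by ext; simp
  map_smul' c a := by ext; exact smul_comm (hp.P g x) c a

theorem finrank_eq [Module.Finite k X] (hp : DualCrossedProduct k L G σc H) (g : G)
    (hs : Submodule.span H (comp hp X g : Set X) = ⊤) :
    Module.finrank k X =
      (MulAction.stabilizer L g).index * Module.finrank k (comp hp X g) := by
  classical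
  have hx : ∀ h : MulAction.orbit L g, ∃ x : L, (h : G) = x • g := by
    rintro ⟨_, x, rfl⟩; exact ⟨x, rfl⟩
  choose xs hxs using hx
  let Φ : X →ₗ[k] (MulAction.orbit L g → comp hp X g) :=
    LinearMap.pi fun h => toComp hp X g (xs h)⁻¹
  have hΦ : ∀ n h, ((Φ n h : comp hp X g) : X) = hp.P g (xs h)⁻¹ • n := fun _ _ => rfl
  have hinj : Function.Injective Φ := by
    rw [← LinearMap.ker_eq_bot, eq_bot_iff]
    intro n hn
    rw [LinearMap.mem_ker] at hn
    refine eq_zero_of_span hp g _ (fun w hw => hw) hs n ?_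
    intro h hh
    refine ⟨xs ⟨h, hh⟩, hxs ⟨h, hh⟩, ?_⟩
    rw [← hΦ, hn]; rfl
  have hsurj : Function.Surjective Φ := by
    intro f
    refine ⟨∑ h : MulAction.orbit L g,
      ((σc g (xs h)⁻¹ (xs h))⁻¹ : kˣ).val • hp.P h (xs h) • (f h : X), ?_⟩
    ext h'
    rw [hΦ, Finset.smul_sum, Finset.sum_eq_single h']
    · rw [smul_comm, smul_smul (hp.P _ _), hp.mul_P, if_pos (by rw [hxs h']; simp),
        smul_assoc, smul_smul, Units.inv_mul, one_smul, inv_mul_cancel]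
      exact (f h').2
    · intro b _ hb
      rw [smul_comm, smul_smul (hp.P _ _), hp.mul_P, if_neg, zero_smul, smul_zero]
      intro h3
      apply hb
      ext
      rw [hxs h']
      exact (eq_inv_smul_iff.1 h3).symm
    · simp
  rw [(LinearEquiv.ofBijective Φ ⟨hinj, hsurj⟩).finrank_eq, Module.finrank_pi_fintype]
  rw [Finset.sum_const, Finset.card_univ, smul_eq_mul, MulAction.index_stabilizer,
    Set.ncard_eq_toFinset_card', Set.toFinset_card]

theorem exists_comp (hp : DualCrossedProduct k L G σc H) [Nontrivial X] {ι : Type} (gs : ι → G)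
    (hgs : ∀ g : G, ∃ i : ι, ∃ x : L, x • gs i = g) :
    ∃ i, ∃ v ∈ comp hp X (gs i), v ≠ 0 := by
  by_contra! hcon
  obtain ⟨n, hn⟩ := exists_ne (0 : X)
  refine hn (eq_zero hp n fun h => ?_)
  obtain ⟨i, x, hx⟩ := hgs h
  exact P_one_zero hp (gs i) h x hx.symm n (hcon i _ (smul_mem_comp hp _ _ _))

theorem span_top (hp : DualCrossedProduct k L G σc H) [IsSimpleModule H X]
    (U : Submodule k X) (hU : U ≠ ⊥) : Submodule.span H (U : Set X) = ⊤ := by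
  rcases eq_bot_or_eq_top (Submodule.span H (U : Set X)) with h | h
  · exfalso
    apply hU
    rw [eq_bot_iff]
    intro u hu
    have : u ∈ Submodule.span H (U : Set X) := Submodule.subset_span hu
    rw [h] at this
    simpa using this
  · exact h

/-- The action of the stabilizer on the component. -/
def rep (hp : DualCrossedProduct k L G σc H) (X : Type) [AddCommGroup X] [Module k X]
    [Module H X] [IsScalarTower k H X] (g : G) (x : MulAction.stabilizer L g) :
    comp hp X g →ₗ[k] comp hp X g := (toComp hp X g x).comp (comp hp X g).subtype

theorem rep_coe (hp : DualCrossedProduct k L G σc H) (g : G) (x : MulAction.stabilizer L g)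
    (v : comp hp X g) : (rep hp X g x v : X) = hp.P g x • (v : X) := rfl

theorem part2 [Module.Finite k X] (hp : DualCrossedProduct k L G σc H) [IsSimpleModule H X] (g : G)
    (hg : ∃ v ∈ comp hp X g, v ≠ 0) :
    IsProjRep k L G σc g (comp hp X g) (rep hp X g) ∧
    IsSimpleRep k L G g (comp hp X g) (rep hp X g) ∧
    IsInducedFrom k L G σc H hp g (comp hp X g) (rep hp X g) X := by
  obtain ⟨v, hv, hv0⟩ := hg
  have hne : comp hp X g ≠ ⊥ := fun h => hv0 (by rw [h] at hv; simpa using hv)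
  have hs := span_top hp (comp hp X g) hne
  refine ⟨⟨?_, ?_⟩, ⟨⟨⟨v, hv⟩, fun h => hv0 (congrArg Subtype.val h)⟩, ?_⟩,
    (comp hp X g).subtype, Subtype.val_injective, ?_, ?_, finrank_eq hp g hs⟩
  · ext w
    exact w.2
  · intro x y
    ext w
    change hp.P g x • hp.P g y • (w : X) = (σc g x y : k) • hp.P g ((x * y : _) : L) • (w : X)
    rw [smul_smul, hp.mul_P, if_pos x.2.symm, smul_assoc]
    rfl
  · intro U hU
    rw [or_iff_not_imp_left]
    intro hU0
    have hU1 : U.map (comp hp X g).subtype ≠ ⊥ := by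
      intro h5
      apply hU0
      rw [eq_bot_iff]
      intro u hu
      have h6 : (u : X) ∈ U.map (comp hp X g).subtype := ⟨u, hu, rfl⟩
      rw [h5, Submodule.mem_bot] at h6
      exact Subtype.ext h6
    have hs1 := span_top hp _ hU1
    rw [eq_top_iff]
    intro w _
    have := proj_mem (k := k) hp g g (U.map (comp hp X g).subtype : Set X) (by rintro _ ⟨u, _, rfl⟩; exact u.2)
      (U.map (comp hp X g).subtype) (by
        rintro x hx _ ⟨u, hu, rfl⟩
        exact ⟨_, hU ⟨x, hx.symm⟩ u hu, rfl⟩) (w : X) (by rw [hs1]; trivial)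
    rw [w.2] at this
    obtain ⟨u, hu, hu2⟩ := this
    have : u = w := Subtype.ext hu2
    rwa [← this]
  · intro h x w
    change hp.P h x • (w : X) = _
    have hw : hp.P g 1 • (w : X) = w := w.2
    have hxg : (x : L) • g = g := x.2
    split_ifs with h1
    · subst h1; rfl
    · rw [← hw, smul_smul, P_mul_one, hxg, if_neg h1, zero_smul]
  · rw [← hs]; congr 1; ext; simp

end DCPaux

/-- **Proposition 4.3 (Kashina–Mason–Montgomery)**: for `H = (kG)* #_σ^τ L` and
`g_1, …, g_t` a set of representatives of the orbits of `L` on `G`, the simple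
`H`-modules are precisely the modules `V̂ = H ⊗_{H_i}(p_i ⊗ V)` induced from `H_i`,
where `V` is a simple `k_{σ_i}L_i`-module and `i ∈ {1, …, t}`; here `H_i` acts on
`V' = p_i ⊗ V` by `(p_h x̄)(p_i ⊗ v) = δ_{g_i,h} p_i ⊗ x̄·v`. -/
theorem simple_modules_of_dual_crossed_product
    (k : Type) [Field k] [IsAlgClosed k] (L G : Type) [Group L] [Group G]
    [Fintype L] [Fintype G] [DecidableEq G] [MulDistribMulAction L G]
    (σc : G → L → L → kˣ) (H : Type) [Ring H] [Algebra k H]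
    (hp : DualCrossedProduct k L G σc H)
    (t : ℕ) (gs : Fin t → G)
    (hgs : ∀ g : G, ∃! i : Fin t, ∃ x : L, x • gs i = g) :
    -- each module induced from a simple `k_{σ_i}L_i`-module is a simple `H`-module …
    (∀ (i : Fin t) (V : Type) [AddCommGroup V] [Module k V] [Module.Finite k V]
      (ρ : ↥(MulAction.stabilizer L (gs i)) → V →ₗ[k] V),
      IsProjRep k L G σc (gs i) V ρ → IsSimpleRep k L G (gs i) V ρ →
      ∀ (X : Type) [AddCommGroup X] [Module k X] [Module H X] [IsScalarTower k H X],
        IsInducedFrom k L G σc H hp (gs i) V ρ X → IsSimpleModule H X) ∧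
    -- … and every (finite-dimensional) simple `H`-module arises this way
    (∀ (X : Type) [AddCommGroup X] [Module k X] [Module H X] [IsScalarTower k H X]
      [Module.Finite k X], IsSimpleModule H X →
      ∃ (i : Fin t) (V : ModuleCat k)
        (ρ : ↥(MulAction.stabilizer L (gs i)) → V →ₗ[k] V),
        Module.Finite k V ∧ IsProjRep k L G σc (gs i) V ρ ∧
          IsSimpleRep k L G (gs i) V ρ ∧
          IsInducedFrom k L G σc H hp (gs i) V ρ X) := by
  constructor
  · intro i V _ _ _ ρ h1 h2 X _ _ _ _ h3
    exact DCPaux.part1 hp (gs i) V ρ h1 h2 h3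
  · intro X _ _ _ _ _ hX
    have hnt : Nontrivial X := IsSimpleModule.nontrivial H X
    obtain ⟨i, hi⟩ := DCPaux.exists_comp (X := X) hp gs (fun g => (hgs g).exists)
    obtain ⟨a, b, c⟩ := DCPaux.part2 (X := X) hp (gs i) hi
    exact ⟨i, ModuleCat.of k (DCPaux.comp hp X (gs i)), DCPaux.rep hp X (gs i),
      inferInstanceAs (Module.Finite k (DCPaux.comp hp X (gs i))), a, b, c⟩
end

section
/- Let H = (kG)*#_σ^τ L with coproduct Δ(p_g x̄) = Σ_{hk=g} τ_{h,k}(x) p_h x̄ ⊗ p_k x̄. Since Δ is an algebra map, for all g,h ∈ G and all x,y ∈ L_g ∩ L_h one has σ_g(x,y)·σ_h(x,y) = σ_{gh}(x,y)·τ_{g,h}(x)^{-1}·τ_{g,h}(y)^{-1}·τ_{g,h}(xy); that is, the cocycles σ_g·σ_h and σ_{gh} restricted to L_g ∩ L_h are cohomologous via τ_{g,h}. Consequently, the map ψ(x̄) = τ_{g,h}(x) x̄ is an algebra isomorphism from the twisted group algebra k_{σ_{gh}}(L_g ∩ L_h) to k_{σ_g·σ_h}(L_g ∩ L_h). -/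
open scoped TensorProduct

/-- A presentation of the (quasi) Hopf algebra `H = (kG)* #_σ^τ L` attached to an action
of a finite group `L` on a finite group `G` by automorphisms:  as an algebra, `H` is the
crossed product `(kG)* #_σ L`, with `k`-basis `{p_g x̄ : g ∈ G, x ∈ L}` and multiplication
`(p_g x̄)(p_h ȳ) = δ_{g,ˣh} σ_g(x,y) p_g (xy)‾`, and the coproduct is the algebra map
`Δ(p_g x̄) = Σ_{hk=g} τ_{h,k}(x) p_h x̄ ⊗ p_k x̄`. -/
structure HopfCrossedProduct (k : Type) [Field k] (L G : Type) [Group L] [Group G]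
    [Fintype L] [Fintype G] [DecidableEq G] [MulDistribMulAction L G]
    (σc : G → L → L → kˣ) (τc : G → G → L → kˣ)
    (H : Type) [Ring H] [Algebra k H] where
  /-- the basis element `p_g x̄` -/
  P : G → L → H
  /-- `{p_g x̄}` is a `k`-basis of `H` -/
  basis : Function.Bijective fun f : G × L → k => ∑ p : G × L, f p • P p.1 p.2
  /-- the multiplication rule `(p_g x̄)(p_h ȳ) = δ_{g,ˣh} σ_g(x,y) p_g (xy)‾` -/
  mul_P : ∀ (g h : G) (x y : L),
    P g x * P h y = if g = x • h then ((σc g x y : k)) • P g (x * y) else 0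
  /-- `Σ_g p_g 1̄ = 1` -/
  sum_P_one : ∑ g : G, P g 1 = 1
  /-- the coproduct, an algebra map (`H` being a quasi Hopf algebra) -/
  comul : H →ₐ[k] H ⊗[k] H
  /-- `Δ(p_g x̄) = Σ_{hk=g} τ_{h,k}(x) p_h x̄ ⊗ p_k x̄` -/
  comul_P : ∀ (g : G) (x : L),
    comul (P g x) = ∑ p : G × G, if p.1 * p.2 = g
      then ((τc p.1 p.2 x : k)) • (P p.1 x ⊗ₜ[k] P p.2 x) else 0

/-- The basis of a twisted group algebra. -/
noncomputable def TwistedGroupAlgebra.toBasis {k : Type} [Field k] {W : Type} [Group W]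
    {β : W → W → kˣ} {T : Type} [Ring T] [Algebra k T] (A : TwistedGroupAlgebra k W β T) :
    Module.Basis W k T :=
  Module.Basis.ofRepr (LinearEquiv.ofBijective (Finsupp.linearCombination k A.bar) A.basis).symm

theorem TwistedGroupAlgebra.toBasis_apply {k : Type} [Field k] {W : Type} [Group W]
    {β : W → W → kˣ} {T : Type} [Ring T] [Algebra k T] (A : TwistedGroupAlgebra k W β T) (x : W) :
    A.toBasis x = A.bar x := by
  have h : A.toBasis x = Finsupp.linearCombination k A.bar (Finsupp.single x 1) := rfl
  rw [h]; simp

section aux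
variable {k : Type} [Field k] {L G : Type} [Group L] [Group G]
    [Fintype L] [Fintype G] [DecidableEq G] [MulDistribMulAction L G]
    {σc : G → L → L → kˣ} {τc : G → G → L → kˣ}
    {H : Type} [Ring H] [Algebra k H]

/-- Coordinate functionals on the crossed product. -/
theorem HopfCrossedProduct.exists_coord (hp : HopfCrossedProduct k L G σc τc H) (g : G) (z : L) :
    ∃ f : H →ₗ[k] k, ∀ a : G, f (hp.P a z) = if a = g then 1 else 0 := by
  classical
  let e : (G × L → k) ≃ₗ[k] H := LinearEquiv.ofBijective
    (Fintype.linearCombination k (fun p : G × L => hp.P p.1 p.2)) hp.basis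
  refine ⟨(LinearMap.proj (g, z)).comp e.symm.toLinearMap, fun a => ?_⟩
  have h : e (Pi.single (a, z) 1) = hp.P a z := by
    change Fintype.linearCombination k (fun p : G × L => hp.P p.1 p.2) (Pi.single (a, z) 1) = _
    simp
  rw [← h]
  simp [Pi.single_apply, eq_comm]

theorem HopfCrossedProduct.rel (hp : HopfCrossedProduct k L G σc τc H) (g h : G) (x y : L)
    (xg : x • g = g) (xh : x • h = h) :
    (σc (g * h) x y : k) * τc g h (x * y)
      = τc g h x * τc g h y * (σc g x y * σc h x y) := by
  classical
  obtain ⟨f, hf⟩ := hp.exists_coord g (x * y)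
  obtain ⟨f', hf'⟩ := hp.exists_coord h (x * y)
  have key : ∀ (f : H →ₗ[k] k) (g : G), x • g = g →
      (∀ a : G, f (hp.P a (x * y)) = if a = g then 1 else 0) →
      ∀ a c : G, f (hp.P a x * hp.P c y) = if a = g ∧ c = g then (σc g x y : k) else 0 := by
    intro f g xg hf a c
    rw [hp.mul_P]
    by_cases hac : a = x • c
    · rw [if_pos hac, map_smul, hf]
      by_cases hag : a = g
      · have : c = g := by
          apply MulAction.injective x
          change x • c = x • g
          rw [← hac, hag, xg]
        simp [hag, this]
      · simp [hag]
    · rw [if_neg hac, map_zero, if_neg]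
      rintro ⟨rfl, rfl⟩
      exact hac xg.symm
  let φ : H ⊗[k] H →ₗ[k] k := LinearMap.mul' k k ∘ₗ TensorProduct.map f f'
  have hφ : ∀ a b, φ (a ⊗ₜ[k] b) = f a * f' b := fun a b => by simp [φ]
  have e1 : hp.P (g * h) x * hp.P (g * h) y = (σc (g * h) x y : k) • hp.P (g * h) (x * y) := by
    rw [hp.mul_P, if_pos]
    rw [smul_mul', xg, xh]
  have e2 := congrArg (fun t => φ (hp.comul t)) e1
  simp only [map_mul, map_smul, hp.comul_P] at e2
  rw [Finset.sum_mul_sum] at e2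
  simp only [map_sum] at e2
  rw [Finset.sum_eq_single (g, h), Finset.sum_eq_single (g, h), Finset.sum_eq_single (g, h)] at e2
  · simp only [if_true, map_smul, hφ, hf, hf', smul_mul_smul_comm, 
      Algebra.TensorProduct.tmul_mul_tmul, key f g xg hf, key f' h xh hf', smul_eq_mul, and_self,
      mul_one] at e2
    exact e2.symm
  · rintro ⟨a, b⟩ - hab
    split_ifs
    · rw [map_smul, hφ, hf, hf']
      by_cases h1 : a = g
      · by_cases h2 : b = h
        · exact absurd (by rw [h1, h2]) hab
        · simp [h2]
      · simp [h1]
    · simp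
  · simp
  · rintro ⟨a, b⟩ - hab
    dsimp only
    split_ifs
    · rw [smul_mul_smul_comm, map_smul, Algebra.TensorProduct.tmul_mul_tmul, hφ,
        key f g xg hf, key f' h xh hf']
      by_cases h1 : a = g
      · by_cases h2 : b = h
        · exact absurd (by rw [h1, h2]) hab
        · simp [h2]
      · simp [h1]
    all_goals simp
  · simp
  · rintro ⟨a, b⟩ - hab
    apply Finset.sum_eq_zero
    rintro ⟨c, d⟩ -
    dsimp only
    split_ifs
    · rw [smul_mul_smul_comm, map_smul, Algebra.TensorProduct.tmul_mul_tmul, hφ,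
        key f g xg hf, key f' h xh hf']
      by_cases h1 : a = g
      · by_cases h2 : b = h
        · exact absurd (by rw [h1, h2]) hab
        · simp [h2]
      · simp [h1]
    all_goals simp
  · simp

end aux

/-- Since the coproduct of `H = (kG)* #_σ^τ L` is an algebra map, for all `g,h ∈ G` and
`x,y ∈ L_g ∩ L_h` one has
`σ_g(x,y)·σ_h(x,y) = σ_{gh}(x,y)·τ_{g,h}(x)⁻¹·τ_{g,h}(y)⁻¹·τ_{g,h}(xy)`; that is,
`σ_g·σ_h` and `σ_{gh}` are cohomologous on `L_g ∩ L_h` via `τ_{g,h}`.  Consequently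
`ψ(x̄) = τ_{g,h}(x) x̄` is an algebra isomorphism
`k_{σ_{gh}}(L_g ∩ L_h) → k_{σ_g·σ_h}(L_g ∩ L_h)`. -/
theorem sigma_tau_compatibility
    (k : Type) [Field k] (L G : Type) [Group L] [Group G]
    [Fintype L] [Fintype G] [DecidableEq G] [MulDistribMulAction L G]
    (σc : G → L → L → kˣ) (τc : G → G → L → kˣ)
    (H : Type) [Ring H] [Algebra k H]
    (hp : HopfCrossedProduct k L G σc τc H)
    (g h : G) :
    -- the cohomology relation (4.8)
    (∀ x y : L, x ∈ MulAction.stabilizer L g ⊓ MulAction.stabilizer L h →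
      y ∈ MulAction.stabilizer L g ⊓ MulAction.stabilizer L h →
      σc g x y * σc h x y
        = σc (g * h) x y * (τc g h x)⁻¹ * (τc g h y)⁻¹ * τc g h (x * y)) ∧
    -- the induced algebra isomorphism `ψ : k_{σ_{gh}}(L_g ∩ L_h) ≅ k_{σ_g σ_h}(L_g ∩ L_h)`
    (∀ (T₁ T₂ : Type) (_ : Ring T₁) (_ : Algebra k T₁) (_ : Ring T₂) (_ : Algebra k T₂)
      (A₁ : TwistedGroupAlgebra k (↥(MulAction.stabilizer L g ⊓ MulAction.stabilizer L h))
        (fun x y => σc (g * h) x y) T₁)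
      (A₂ : TwistedGroupAlgebra k (↥(MulAction.stabilizer L g ⊓ MulAction.stabilizer L h))
        (fun x y => σc g x y * σc h x y) T₂),
      ∃ Ψ : T₁ ≃ₐ[k] T₂,
        ∀ x : ↥(MulAction.stabilizer L g ⊓ MulAction.stabilizer L h),
          Ψ (A₁.bar x) = ((τc g h x : k)) • A₂.bar x) := by
  have rel : ∀ x y : L, x ∈ MulAction.stabilizer L g ⊓ MulAction.stabilizer L h →
      (σc (g * h) x y : k) * τc g h (x * y)
      = τc g h x * τc g h y * (σc g x y * σc h x y) := fun x y hx =>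
    hp.rel g h x y (MulAction.mem_stabilizer_iff.1 hx.1) (MulAction.mem_stabilizer_iff.1 hx.2)
  refine ⟨fun x y hx _ => ?_, ?_⟩
  · have e : σc (g * h) x y * τc g h (x * y)
        = τc g h x * τc g h y * (σc g x y * σc h x y) := by
      ext
      push_cast
      exact rel x y hx
    rw [mul_right_comm, mul_right_comm _ _ (τc g h (x * y)), e, mul_assoc (τc g h x),
      mul_comm (τc g h x), mul_inv_cancel_right, mul_comm (τc g h y), mul_inv_cancel_right]
  · intro T₁ T₂ _ _ _ _ A₁ A₂
    let B₂ := A₂.toBasis.unitsSMul (fun x => τc g h x)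
    let Ψ : T₁ ≃ₗ[k] T₂ := A₁.toBasis.equiv B₂ (Equiv.refl _)
    have hΨ : ∀ x, Ψ (A₁.bar x) = (τc g h x : k) • A₂.bar x := by
      intro x
      rw [← A₁.toBasis_apply, ← A₂.toBasis_apply]
      simp only [Ψ, Module.Basis.equiv_apply, B₂, Equiv.refl_apply, Module.Basis.unitsSMul_apply,
        Units.smul_def]
    have hmul : ∀ x y, Ψ (A₁.bar x * A₁.bar y) = Ψ (A₁.bar x) * Ψ (A₁.bar y) := by
      intro x y
      rw [A₁.bar_mul, map_smul, hΨ, hΨ, hΨ, smul_mul_smul_comm, A₂.bar_mul, smul_smul, smul_smul]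
      congr 1
      have := rel x y x.2
      push_cast
      exact this
    have hmul' : ∀ a b, Ψ (a * b) = Ψ a * Ψ b := by
      have : (LinearMap.mul k T₁).compr₂ Ψ.toLinearMap
          = (LinearMap.mul k T₂).compl₁₂ Ψ.toLinearMap Ψ.toLinearMap := by
        refine A₁.toBasis.ext fun x => A₁.toBasis.ext fun y => ?_
        simpa [A₁.toBasis_apply] using hmul x y
      intro a b
      exact LinearMap.congr_fun (LinearMap.congr_fun this a) b
    have hone : Ψ 1 = 1 := by
      obtain ⟨u, hu⟩ := Ψ.surjective 1
      have := hmul' 1 u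
      rw [one_mul, hu, mul_one] at this
      exact this.symm
    exact ⟨AlgEquiv.ofLinearEquiv Ψ hone hmul', hΨ⟩
end
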